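/- arXiv:2408.13472 — 6 statements merged into one kernel-verified Lean document; each statement's English description precedes it below -/
import Mathlib

section
/- Let n ≥ 2^k and n ≥ k+1. For λ ∈ {0,1,…,n} let m_λ = C(n,λ), and for j ∈ {0,1,…,k} let c_j ∈ ℤ^{n+1} be the vector with entries (c_j)_λ = C(n−k, λ−j). Then the minimum of Σ_{λ=0}^n C(n,λ)·max(x_λ,0) over all nonzero integer vectors x ∈ ℤ^{n+1} satisfying Σ_{λ=0}^n (c_j)_λ x_λ = 0 for every j ∈ {0,…,k} equals (2^{⌊k/2⌋}/⌈k/2⌉!) · ∏_{α=1}^{⌈k/2⌉} (n−k+2α−1). -/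
/-!
Write `n = d + k + 1`, `r = ⌈k/2⌉`, `q = ⌊k/2⌋`. An orthogonal `x` satisfies
`∑ C(n,l) x_l = 0` (iterate Pascal's rule), so the objective is half of the weighted norm
`∑ C(n,l) |x_l|`.

The minimizer `extr d r q` lives on `{0, …, r} ∪ {n - q, …, n}`, with entries
`± C(d + r - i, d)` at `i` and `± C(d + q - i, d)` at `n - i`. Pairing the left block with `c_j` is a
coefficient extraction from `X^j (1 - X)^(d+1) (1 - X)^(-(d+1)) = X^j`, hence is nonzero only for
`j = r`; the right block, too, pairs to zero with `c_j` unless `j = r`, and the two contributions cancel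
(`orth_extr`). Its norm is the sum for `s = r, q` of
`convSum n d s = [X^s] (1 + X)^n (1 - X)^(-(d+1))`, and the first-order differential equation of
this series gives the recurrence leading to the product formula (`factorial_mul_convSum`).

For the lower bound, a nonzero entry at `l` forces the objective to be at least `C(n,l)`, which
is no smaller than the claimed minimum when `r < l < n - r`, because `n ≥ 2^k`. The remaining
vectors live on `{0, …, r} ∪ {n - r, …, n}`. An orthogonal vector on two end blocks of `k + 1` points in total is
zero, the system being triangular (`Orth.eq_zero_of_support`). Subtracting suitable multiples,
for even `k` the vector `x` is an integer multiple of `extr d r r`. For odd `k` it is an integer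
combination `β * extr d r q + γ * extr d q r` of the extremal vector and its mirror image, and the
bound holds separately for each pair of positions `l`, `n - l` (`add_le_abs_add_abs`).
The case `k = 1` needs only `C(n,1) = n`.
-/

/-- the binomial coefficient `C(a,b)` for `b : ℤ`, with the convention that it vanishes
whenever `b ∉ {0, 1, …, a}` -/
def binomZ (a : ℕ) (b : ℤ) : ℤ := if 0 ≤ b then (a.choose b.toNat : ℤ) else 0

open Finset

/-! ### Power series identities -/

section Series

open PowerSeries

theorem coeff_one_add_X_pow' (m s : ℕ) :
    coeff s ((1 + X : ℤ⟦X⟧) ^ m) = (m.choose s : ℤ) := by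
  have h : (1 + X : ℤ⟦X⟧) ^ m = (((1 + Polynomial.X) ^ m : Polynomial ℤ) : ℤ⟦X⟧) := by
    push_cast; simp
  rw [h, Polynomial.coeff_coe, Polynomial.coeff_one_add_X_pow]

theorem coeff_one_sub_X_pow (m s : ℕ) :
    coeff s ((1 - X : ℤ⟦X⟧) ^ m) = (-1) ^ s * (m.choose s : ℤ) := by
  have h : (1 - X : ℤ⟦X⟧) ^ m = rescale (-1 : ℤ) ((1 + X) ^ m) := by
    rw [map_pow, map_add, map_one, rescale_X]
    simp [sub_eq_add_neg]
  rw [h, coeff_rescale, coeff_one_add_X_pow']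

/-- The coefficient form of `(1 - X)^(d+1) * (1 - X)^(-(d+1)) = 1`. -/
theorem alternating_convolution (d t : ℕ) :
    ∑ s ∈ range (t + 1), (-1 : ℤ) ^ s * ((d + 1).choose s : ℤ) * ((d + (t - s)).choose d : ℤ)
      = if t = 0 then 1 else 0 := by
  have h : (1 - X : ℤ⟦X⟧) ^ (d + 1) * (mk 1 : ℤ⟦X⟧) ^ (d + 1) = 1 := by
    rw [← mul_pow, mul_comm, mk_one_mul_one_sub_eq_one, one_pow]
  have h2 := congrArg (coeff t) h
  rw [coeff_mul, mk_one_pow_eq_mk_choose_add, coeff_one] at h2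
  rw [← h2, Finset.Nat.sum_antidiagonal_eq_sum_range_succ
    (fun i j => coeff i ((1 - X : ℤ⟦X⟧) ^ (d + 1)) * coeff j (mk fun n => ((d + n).choose d : ℤ)))]
  exact sum_congr rfl fun s _ => by rw [coeff_one_sub_X_pow, coeff_mk]

/-- The coefficient of `X^s` in `(1 + X)^N * (1 - X)^(-(d+1))`. -/
def convSum (N d s : ℕ) : ℤ :=
  ∑ i ∈ range (s + 1), (N.choose i : ℤ) * ((d + (s - i)).choose d : ℤ)

theorem convSum_eq_coeff (N d s : ℕ) :
    convSum N d s = coeff s ((1 + X : ℤ⟦X⟧) ^ N * (mk 1 : ℤ⟦X⟧) ^ (d + 1)) := by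
  rw [coeff_mul, mk_one_pow_eq_mk_choose_add, convSum,
    Finset.Nat.sum_antidiagonal_eq_sum_range_succ
    (fun i j => coeff i ((1 + X : ℤ⟦X⟧) ^ N) * coeff j (mk fun n => ((d + n).choose d : ℤ)))]
  exact sum_congr rfl fun s _ => by rw [coeff_one_add_X_pow', coeff_mk]

theorem convSum_succ_left (N d s : ℕ) :
    convSum (N + 1) d (s + 1) = convSum N d (s + 1) + convSum N d s := by
  simp only [convSum_eq_coeff]
  rw [← coeff_succ_mul_X s, ← map_add]
  congr 1
  ring

/-- The differential equation of `(1 + X)^a * (1 - X)^(-b)`, cleared of denominators. -/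
theorem one_sub_sq_mul_derivative (a b : ℕ) :
    (1 - X ^ 2) * d⁄dX ℤ ((1 + X : ℤ⟦X⟧) ^ a * (mk 1 : ℤ⟦X⟧) ^ b)
      = ((1 + X : ℤ⟦X⟧) ^ a * (mk 1 : ℤ⟦X⟧) ^ b) * ((a : ℤ⟦X⟧) * (1 - X) + (b : ℤ⟦X⟧) * (1 + X)) := by
  have hu : (mk 1 : ℤ⟦X⟧) * (1 - X) = 1 := mk_one_mul_one_sub_eq_one ℤ
  set u : ℤ⟦X⟧ := mk 1
  have hdu : d⁄dX ℤ u * (1 - X) = u := by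
    have h := congrArg (d⁄dX ℤ) hu
    rw [Derivation.leibniz] at h
    simp only [map_sub, smul_eq_mul, derivative_X, Derivation.map_one_eq_zero] at h
    linear_combination h
  have h1 : (1 + X) * d⁄dX ℤ ((1 + X : ℤ⟦X⟧) ^ a) = (a : ℤ⟦X⟧) * (1 + X) ^ a := by
    rw [Derivation.leibniz_pow]
    cases a with
    | zero => simp
    | succ a =>
      simp only [map_add, derivative_X, Derivation.map_one_eq_zero, smul_eq_mul, nsmul_eq_mul,
        Nat.add_sub_cancel]
      ring
  have h2 : (1 - X) * d⁄dX ℤ (u ^ b) = (b : ℤ⟦X⟧) * u ^ b := by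
    rw [Derivation.leibniz_pow]
    cases b with
    | zero => simp
    | succ b =>
      simp only [smul_eq_mul, nsmul_eq_mul, Nat.add_sub_cancel]
      linear_combination (((b + 1 : ℕ) : ℤ⟦X⟧) * u ^ b) * hdu
  rw [Derivation.leibniz]
  simp only [smul_eq_mul]
  linear_combination ((1 - X) * u ^ b) * h1 + ((1 + X) * (1 + X) ^ a) * h2

/-- The recurrence in `r` behind the product formula; it holds because the exponents
`2 * r + d + 1` and `d + 1` are tuned so that the `X^(r-1)` coefficients cancel. -/
theorem convSum_recurrence (d r : ℕ) :
    ((r : ℤ) + 1) * convSum (2 * (r + 1) + d + 1) d (r + 1)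
      = 2 * (d + 2 * r + 2) * convSum (2 * r + d + 1) d r := by
  have hode := one_sub_sq_mul_derivative (2 * r + d + 1) (d + 1)
  have hf : (1 + X : ℤ⟦X⟧) ^ (2 * (r + 1) + d + 1) * (mk 1 : ℤ⟦X⟧) ^ (d + 1)
      = ((1 + X : ℤ⟦X⟧) ^ (2 * r + d + 1) * (mk 1 : ℤ⟦X⟧) ^ (d + 1)) * (1 + X) ^ 2 := by ring
  rw [convSum_eq_coeff, convSum_eq_coeff, hf]
  set g : ℤ⟦X⟧ := (1 + X : ℤ⟦X⟧) ^ (2 * r + d + 1) * (mk 1 : ℤ⟦X⟧) ^ (d + 1)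
  have hode' : d⁄dX ℤ g - d⁄dX ℤ g * X * X
      = (2 * r + 2 * d + 2 : ℤ) • g - (2 * r : ℤ) • (g * X) := by
    simp only [zsmul_eq_mul]
    push_cast at hode ⊢
    linear_combination hode
  have hf' : g * (1 + X) ^ 2 = g + (2 : ℤ) • (g * X) + g * X * X := by
    simp only [zsmul_eq_mul]
    push_cast
    ring
  rw [hf']
  have hc := congrArg (coeff r) hode'
  cases r with
  | zero =>
    simp only [map_sub, map_add, map_zsmul, coeff_derivative, smul_eq_mul, coeff_succ_mul_X,
      coeff_zero_mul_X] at hc ⊢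
    push_cast at hc ⊢
    linear_combination hc
  | succ r =>
    cases r with
    | zero =>
      simp only [map_sub, map_add, map_zsmul, coeff_derivative, smul_eq_mul, coeff_succ_mul_X,
        coeff_zero_mul_X] at hc ⊢
      push_cast at hc ⊢
      linear_combination hc
    | succ r =>
      simp only [map_sub, map_add, map_zsmul, coeff_derivative, smul_eq_mul, coeff_succ_mul_X]
        at hc ⊢
      push_cast at hc ⊢
      linear_combination hc

theorem factorial_mul_convSum (d r : ℕ) :
    (r.factorial : ℤ) * convSum (2 * r + d + 1) d r
      = 2 ^ r * ∏ α ∈ Icc 1 r, ((d : ℤ) + 2 * α) := by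
  induction r with
  | zero => simp [convSum]
  | succ r ih =>
    rw [prod_Icc_succ_top (by omega), Nat.factorial_succ]
    push_cast
    linear_combination (r.factorial : ℤ) * convSum_recurrence d r + 2 * ((d : ℤ) + 2 * r + 2) * ih

end Series

/-! ### Integer-indexed binomial coefficients -/

theorem binomZ_natCast (a b : ℕ) : binomZ a (b : ℤ) = (a.choose b : ℤ) := by
  simp [binomZ]

theorem binomZ_of_neg (a : ℕ) {b : ℤ} (hb : b < 0) : binomZ a b = 0 := by
  simp [binomZ, not_le.2 hb]

theorem binomZ_of_lt (a : ℕ) {b : ℤ} (hb : (a : ℤ) < b) : binomZ a b = 0 := by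
  lift b to ℕ using by omega
  rw [binomZ_natCast, Nat.choose_eq_zero_of_lt (by omega), Nat.cast_zero]

theorem binomZ_symm (a : ℕ) (b : ℤ) : binomZ a ((a : ℤ) - b) = binomZ a b := by
  rcases lt_or_ge b 0 with hb | hb
  · rw [binomZ_of_neg a hb, binomZ_of_lt a (by omega)]
  rcases lt_or_ge (a : ℤ) b with hb' | hb'
  · rw [binomZ_of_lt a hb', binomZ_of_neg a (by omega)]
  lift b to ℕ using hb
  have h : b ≤ a := by omega
  rw [← Nat.cast_sub h, binomZ_natCast, binomZ_natCast, Nat.choose_symm h]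

theorem binomZ_pascal (a : ℕ) (b : ℤ) :
    binomZ (a + 1) b = binomZ a b + binomZ a (b - 1) := by
  rcases lt_trichotomy b 0 with hb | rfl | hb
  · rw [binomZ_of_neg _ hb, binomZ_of_neg _ hb, binomZ_of_neg _ (by omega), add_zero]
  · simp [binomZ]
  · obtain ⟨m, rfl⟩ : ∃ m : ℕ, b = ((m + 1 : ℕ) : ℤ) := ⟨(b - 1).toNat, by omega⟩
    rw [show (((m + 1 : ℕ) : ℤ)) - 1 = (m : ℤ) by push_cast; ring]
    simp only [binomZ_natCast]
    rw [Nat.choose_succ_succ]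
    push_cast
    ring

/-! ### Orthogonal vectors -/

/-- The integer vectors orthogonal to `c_0, …, c_k` when `n = d + k + 1`. A vector indexed by
`{0, …, n}` is encoded as a function on `ℕ` whose values beyond `n` are irrelevant. -/
def Orth (d k : ℕ) (x : ℕ → ℤ) : Prop :=
  ∀ j ≤ k, ∑ l ∈ range (d + k + 2), binomZ (d + 1) ((l : ℤ) - j) * x l = 0

/-- The weighted `ℓ¹` norm `∑ C(n,l) |x_l|`, with `n = d + k + 1`. -/
def wnorm (d k : ℕ) (x : ℕ → ℤ) : ℤ :=
  ∑ l ∈ range (d + k + 2), ((d + k + 1).choose l : ℤ) * |x l|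

theorem Orth.sub_smul {d k : ℕ} {x y : ℕ → ℤ} (hx : Orth d k x) (hy : Orth d k y) (c : ℤ) :
    Orth d k fun l => x l - c * y l := by
  intro j hj
  have h : ∀ l : ℕ, binomZ (d + 1) ((l : ℤ) - j) * (x l - c * y l)
      = binomZ (d + 1) ((l : ℤ) - j) * x l - c * (binomZ (d + 1) ((l : ℤ) - j) * y l) :=
    fun l => by ring
  simp only [h, sum_sub_distrib, ← mul_sum, hx j hj, hy j hj]
  ring

/-- Iterating Pascal's rule, the vector `(C(a+k, l))_l` is a combination of the `c_j`. -/
theorem sum_binomZ_add_eq_zero (x : ℕ → ℤ) (s : Finset ℕ) (k : ℕ) : ∀ a : ℕ,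
    (∀ j ≤ k, ∑ l ∈ s, binomZ a ((l : ℤ) - j) * x l = 0) →
    ∑ l ∈ s, binomZ (a + k) (l : ℤ) * x l = 0 := by
  induction k with
  | zero => intro a h; simpa using h 0 le_rfl
  | succ k ih =>
    intro a h
    have h2 := ih (a + 1) fun j hj => by
      have h3 : ∀ l : ℕ, binomZ (a + 1) ((l : ℤ) - j) * x l
          = binomZ a ((l : ℤ) - j) * x l + binomZ a ((l : ℤ) - (j + 1 : ℕ)) * x l := fun l => by
        rw [binomZ_pascal, show (l : ℤ) - j - 1 = (l : ℤ) - (j + 1 : ℕ) by push_cast; ring]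
        ring
      simp only [h3, sum_add_distrib, h j (by omega), h (j + 1) (by omega), add_zero]
    rwa [show a + (k + 1) = a + 1 + k by ring]

theorem Orth.weighted_sum_eq_zero {d k : ℕ} {x : ℕ → ℤ} (hx : Orth d k x) :
    ∑ l ∈ range (d + k + 2), ((d + k + 1).choose l : ℤ) * x l = 0 := by
  have h := sum_binomZ_add_eq_zero x (range (d + k + 2)) k (d + 1) hx
  rw [← h]
  refine sum_congr rfl fun l _ => ?_
  rw [binomZ_natCast, show d + 1 + k = d + k + 1 by ring]

/-- Two blocks at the ends with `k + 1` points in total carry no nonzero orthogonal vector: there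
the system of the `c_j` is triangular on each block. -/
theorem Orth.eq_zero_of_support {d k : ℕ} {x : ℕ → ℤ} (hx : Orth d k x) (a c : ℕ)
    (hac : a + c = k + 1) (h0 : ∀ l, a ≤ l → l ≤ d + a → x l = 0) :
    ∀ l ≤ d + k + 1, x l = 0 := by
  have left : ∀ t j, a - t ≤ j → j < a → x j = 0 := by
    intro t
    induction t with
    | zero => intro j h1 h2; omega
    | succ t ih =>
      intro j h1 h2
      have h := hx j (by omega)
      rw [sum_eq_single_of_mem j (mem_range.2 (by omega))] at h
      · simpa [binomZ] using h
      · intro l hl hlj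
        rcases lt_or_gt_of_ne hlj with h3 | h3
        · rw [binomZ_of_neg _ (by omega), zero_mul]
        rcases lt_or_ge l a with h4 | h4
        · rw [ih l (by omega) h4, mul_zero]
        rcases le_or_gt l (d + a) with h5 | h5
        · rw [h0 l h4 h5, mul_zero]
        · rw [binomZ_of_lt _ (by push_cast; omega), zero_mul]
  have left' : ∀ l ≤ d + a, x l = 0 := fun l hl => by
    rcases lt_or_ge l a with h4 | h4
    · exact left a l (by omega) h4
    · exact h0 l h4 hl
  intro l
  induction l using Nat.strong_induction_on with
  | _ l ih =>
    intro hl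
    rcases le_or_gt l (d + a) with h5 | h5
    · exact left' l h5
    -- the row `j` whose last nonzero entry, `C(d+1, d+1) = 1`, sits at `l`
    obtain ⟨j, rfl⟩ : ∃ j, l = d + 1 + j := ⟨l - (d + 1), by omega⟩
    have h := hx j (by omega)
    rw [sum_eq_single_of_mem (d + 1 + j) (mem_range.2 (by omega))] at h
    · rw [show ((d + 1 + j : ℕ) : ℤ) - j = ((d + 1 : ℕ) : ℤ) by push_cast; ring,
        binomZ_natCast, Nat.choose_self] at h
      simpa using h
    · intro m hm hmj
      rcases lt_or_gt_of_ne hmj with h3 | h3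
      · rw [ih m h3 (by omega), mul_zero]
      · rw [binomZ_of_lt _ (by push_cast; omega), zero_mul]

/-! ### The extremal vector -/

/-- The absolute values `C(d + s - i, d)` of the entries of the extremal vector on one of its two
blocks `{0, …, s}`, extended by zero. -/
def blk (d s i : ℕ) : ℤ := if i ≤ s then ((d + (s - i)).choose d : ℤ) else 0

theorem blk_nonneg (d s i : ℕ) : 0 ≤ blk d s i := by
  unfold blk; split_ifs <;> positivity

theorem blk_self (d s : ℕ) : blk d s s = 1 := by simp [blk]

theorem blk_of_lt {d s i : ℕ} (h : s < i) : blk d s i = 0 := by simp [blk, not_le.2 h]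

theorem sum_mul_blk (f : ℕ → ℤ) (d s : ℕ) {M : ℕ} (hM : s < M) :
    ∑ l ∈ range M, f l * blk d s l
      = ∑ l ∈ range (s + 1), f l * ((d + (s - l)).choose d : ℤ) := by
  rw [← sum_subset (range_subset_range.2 (show s + 1 ≤ M by omega))]
  · refine sum_congr rfl fun l hl => ?_
    rw [blk, if_pos (by simpa [Nat.lt_succ_iff] using hl)]
  · intro l _ hl
    rw [blk_of_lt (by simpa using hl), mul_zero]

theorem sum_choose_mul_blk (N d s : ℕ) {M : ℕ} (hM : s < M) :
    ∑ l ∈ range M, (N.choose l : ℤ) * blk d s l = convSum N d s :=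
  sum_mul_blk _ d s hM

/-- One block is orthogonal to every `c_j` but the one with `j = s`. -/
theorem sum_binomZ_blk (d s j : ℕ) {M : ℕ} (hM : s < M) :
    ∑ l ∈ range M, binomZ (d + 1) ((l : ℤ) - j) * ((-1) ^ l * blk d s l)
      = if j = s then (-1) ^ s else 0 := by
  simp only [← mul_assoc]
  rw [sum_mul_blk (fun l => binomZ (d + 1) ((l : ℤ) - j) * (-1) ^ l) d s hM]
  rcases lt_or_ge s j with h | h
  · rw [if_neg (by omega)]
    refine sum_eq_zero fun l hl => ?_
    rw [mem_range] at hl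
    rw [binomZ_of_neg _ (by omega), zero_mul, zero_mul]
  · obtain ⟨t, rfl⟩ := Nat.exists_eq_add_of_le h
    rw [show j + t + 1 = j + (t + 1) by ring, sum_range_add, sum_eq_zero, zero_add]
    · have h2 : ∀ i ∈ range (t + 1),
          binomZ (d + 1) (((j + i : ℕ) : ℤ) - j) * (-1) ^ (j + i)
            * ((d + (j + t - (j + i))).choose d : ℤ)
          = (-1) ^ j * ((-1 : ℤ) ^ i * ((d + 1).choose i : ℤ) * ((d + (t - i)).choose d : ℤ)) := by
        intro i _
        rw [show ((j + i : ℕ) : ℤ) - j = (i : ℤ) by push_cast; ring, binomZ_natCast,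
          show j + t - (j + i) = t - i by omega, pow_add]
        ring
      rw [sum_congr rfl h2, ← mul_sum, alternating_convolution]
      rcases Nat.eq_zero_or_pos t with rfl | ht
      · simp
      · rw [if_neg (by omega), if_neg (by omega), mul_zero]
    · intro l hl
      rw [mem_range] at hl
      rw [binomZ_of_neg _ (by omega), zero_mul, zero_mul]

/-- The extremal vector for `k = r + q`, supported on `{0, …, r} ∪ {n - q, …, n}`, where
`n = d + r + q + 1`. -/
def extr (d r q l : ℕ) : ℤ :=
  (-1) ^ (r + q + 1) * ((-1) ^ l * blk d r l)
    + (-1) ^ (d + r + q + 1 - l) * blk d q (d + r + q + 1 - l)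

theorem orth_extr {d k r q : ℕ} (hk : k = r + q) : Orth d k (extr d r q) := by
  subst hk
  intro j hj
  have h2 : ∑ l ∈ range (d + (r + q) + 2), binomZ (d + 1) ((l : ℤ) - j)
      * ((-1) ^ (d + r + q + 1 - l) * blk d q (d + r + q + 1 - l))
      = if r + q - j = q then (-1) ^ q else 0 := by
    rw [← sum_binomZ_blk d q (r + q - j) (show q < d + (r + q) + 2 by omega),
      ← sum_range_reflect (fun l => binomZ (d + 1) ((l : ℤ) - (r + q - j : ℕ))
        * ((-1) ^ l * blk d q l))]
    refine sum_congr rfl fun l hl => ?_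
    rw [mem_range] at hl
    rw [← binomZ_symm, show d + (r + q) + 2 - 1 - l = d + r + q + 1 - l by omega]
    congr 2
    push_cast [Nat.cast_sub hj, Nat.cast_sub (show l ≤ d + r + q + 1 by omega)]
    ring
  have h3 : ∀ l : ℕ, binomZ (d + 1) ((l : ℤ) - j) * extr d r q l
      = (-1) ^ (r + q + 1) * (binomZ (d + 1) ((l : ℤ) - j) * ((-1) ^ l * blk d r l))
        + binomZ (d + 1) ((l : ℤ) - j)
          * ((-1) ^ (d + r + q + 1 - l) * blk d q (d + r + q + 1 - l)) := fun l => by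
    rw [extr]; ring
  simp only [h3, sum_add_distrib, ← mul_sum]
  rw [h2, sum_binomZ_blk d r j (show r < d + (r + q) + 2 by omega)]
  by_cases hjr : j = r
  · rw [if_pos hjr, if_pos (by omega), pow_succ, pow_add]
    have : ((-1 : ℤ) ^ r) * (-1) ^ r = 1 := by rw [← mul_pow]; simp
    linear_combination (-(-1) ^ q) * this
  · rw [if_neg hjr, if_neg (by omega)]; simp

theorem extr_right_end {d r q : ℕ} : extr d r q (d + r + 1) = (-1) ^ q := by
  rw [extr, blk_of_lt (by omega : r < d + r + 1), show d + r + q + 1 - (d + r + 1) = q by omega,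
    blk_self]
  ring

/-- A signed sum in which `u l` or `v (n - l)` vanishes, as for the entries of vectors supported on
two disjoint end blocks. -/
theorem abs_signed_add {d r q l : ℕ} (u v : ℕ → ℤ)
    (hu : r < l → u l = 0) (hv : l ≤ r → v (d + r + q + 1 - l) = 0) (e f g : ℕ) :
    |(-1) ^ e * ((-1) ^ f * u l) + (-1) ^ g * v (d + r + q + 1 - l)|
      = |u l| + |v (d + r + q + 1 - l)| := by
  rcases lt_or_ge r l with h | h
  · rw [hu h]; simp [abs_mul]
  · rw [hv h]; simp [abs_mul]

theorem wnorm_extr {d k r q : ℕ} (hk : k = r + q) :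
    wnorm d k (extr d r q) = convSum (d + k + 1) d r + convSum (d + k + 1) d q := by
  subst hk
  rw [← sum_choose_mul_blk _ d r (show r < d + (r + q) + 2 by omega),
    ← sum_choose_mul_blk _ d q (show q < d + (r + q) + 2 by omega),
    ← sum_range_reflect (fun l => ((d + (r + q) + 1).choose l : ℤ) * blk d q l),
    ← sum_add_distrib, wnorm]
  refine sum_congr rfl fun l hl => ?_
  rw [mem_range] at hl
  rw [extr, abs_signed_add (blk d r) (blk d q) blk_of_lt
    (fun h => blk_of_lt (by omega)), abs_of_nonneg (blk_nonneg _ _ _),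
    abs_of_nonneg (blk_nonneg _ _ _), show d + (r + q) + 2 - 1 - l = d + (r + q) + 1 - l by omega,
    Nat.choose_symm (by omega), show d + (r + q) + 1 - l = d + r + q + 1 - l by omega]
  ring

/-! ### The lower bound -/

theorem choose_le_choose_of_mem {n s l : ℕ} (h1 : s ≤ l) (h2 : s + l ≤ n) :
    n.choose s ≤ n.choose l := by
  have key : ∀ m, s ≤ m → m ≤ n / 2 → n.choose s ≤ n.choose m := by
    intro m hm
    induction m, hm using Nat.le_induction with
    | base => intro _; exact le_rfl
    | succ m _ ih =>
      intro h
      exact (ih (by omega)).trans (Nat.choose_le_succ_of_lt_half_left (by omega))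
  rcases le_or_gt l (n / 2) with h | h
  · exact key l h1 h
  · rw [← Nat.choose_symm (show l ≤ n by omega)]
    exact key (n - l) (by omega) (by omega)

/-- As the weighted entries sum to zero, each of them is at most half of the norm. -/
theorem Orth.two_mul_choose_le_wnorm {d k : ℕ} {x : ℕ → ℤ} (hx : Orth d k x) {l : ℕ}
    (hl : l ≤ d + k + 1) (hxl : x l ≠ 0) : 2 * ((d + k + 1).choose l : ℤ) ≤ wnorm d k x := by
  have hmem : l ∈ range (d + k + 2) := mem_range.2 (by omega)
  have h := hx.weighted_sum_eq_zero
  rw [← add_sum_erase _ _ hmem] at h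
  rw [wnorm, ← add_sum_erase _ _ hmem]
  have h2 : |∑ m ∈ (range (d + k + 2)).erase l, ((d + k + 1).choose m : ℤ) * x m|
      ≤ ∑ m ∈ (range (d + k + 2)).erase l, ((d + k + 1).choose m : ℤ) * |x m| := by
    refine (abs_sum_le_sum_abs _ _).trans (sum_le_sum fun m _ => ?_)
    rw [abs_mul, Nat.abs_cast]
  rw [← neg_eq_of_add_eq_zero_right h, abs_neg, abs_mul, Nat.abs_cast] at h2
  have h3 : ((d + k + 1).choose l : ℤ) * 1 ≤ ((d + k + 1).choose l : ℤ) * |x l| :=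
    mul_le_mul_of_nonneg_left (Int.one_le_abs hxl) (by positivity)
  linarith

theorem prod_le_descFactorial (d r : ℕ) :
    ∏ α ∈ Icc 1 r, (d + 2 * α) ≤ (d + 2 * r).descFactorial r := by
  induction r with
  | zero => simp
  | succ r ih =>
    rw [prod_Icc_succ_top (by omega), show d + 2 * (r + 1) = d + 2 * r + 1 + 1 by ring,
      Nat.succ_descFactorial_succ, mul_comm]
    exact Nat.mul_le_mul le_rfl (ih.trans (Nat.descFactorial_le _ (by omega)))

/-- For `k = 2 r`, an entry outside the blocks costs at least the claimed minimum. -/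
theorem convSum_le_choose_even (d r : ℕ) (h : 2 ^ (2 * r) ≤ d + 2 * r + 1) :
    convSum (d + 2 * r + 1) d r ≤ ((d + 2 * r + 1).choose (r + 1) : ℤ) := by
  have h1 := factorial_mul_convSum d r
  rw [show 2 * r + d + 1 = d + 2 * r + 1 by ring] at h1
  have h2 : (r + 1) * 2 ^ r ≤ d + 2 * r + 1 := by
    refine le_trans ?_ h
    rw [two_mul, pow_add]
    exact Nat.mul_le_mul Nat.lt_two_pow_self le_rfl
  have h3 : (r + 1) * 2 ^ r * ∏ α ∈ Icc 1 r, (d + 2 * α)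
      ≤ (r + 1).factorial * (d + 2 * r + 1).choose (r + 1) := by
    rw [← Nat.descFactorial_eq_factorial_mul_choose, Nat.succ_descFactorial_succ]
    exact Nat.mul_le_mul h2 (prod_le_descFactorial d r)
  zify at h3
  rw [Nat.factorial_succ] at h3
  push_cast at h3
  refine le_of_mul_le_mul_left (a := ((r : ℤ) + 1) * r.factorial) ?_ (by positivity)
  calc ((r : ℤ) + 1) * r.factorial * convSum (d + 2 * r + 1) d r
      = (r + 1) * 2 ^ r * ∏ α ∈ Icc 1 r, ((d : ℤ) + 2 * α) := by
        rw [mul_assoc, h1, mul_assoc]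
    _ ≤ _ := h3

theorem odd_growth (q : ℕ) (hq : 1 ≤ q) : (q + 2) * 2 ^ q + (q + 1) ≤ 2 ^ (2 * q + 1) := by
  induction q, hq using Nat.le_induction with
  | base => norm_num
  | succ q hq ih =>
    have h1 : 2 ^ (2 * (q + 1) + 1) = 4 * 2 ^ (2 * q + 1) := by ring
    have h2 : 2 ^ (q + 1) = 2 * 2 ^ q := by ring
    have h3 : 1 ≤ 2 ^ q := Nat.one_le_two_pow
    rw [h1, h2]
    nlinarith

/-- For `k = 2 q + 1 ≥ 3`, an entry outside the blocks costs at least the claimed minimum. -/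
theorem convSum_le_choose_odd (d q : ℕ) (hq : 1 ≤ q) (h : 2 ^ (2 * q + 1) ≤ d + 2 * q + 2) :
    convSum (d + 2 * q + 2) d (q + 1) + convSum (d + 2 * q + 2) d q
      ≤ 2 * ((d + 2 * q + 2).choose (q + 2) : ℤ) := by
  rw [← convSum_succ_left]
  have h1 := factorial_mul_convSum d (q + 1)
  rw [show 2 * (q + 1) + d + 1 = d + 2 * q + 2 + 1 by ring] at h1
  have h2 : (q + 2) * 2 ^ q ≤ d + 2 * q + 2 - (q + 1) := by
    have := odd_growth q hq; omega
  have h3 : (q + 2) * 2 ^ q * ∏ α ∈ Icc 1 (q + 1), (d + 2 * α)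
      ≤ (q + 2).factorial * (d + 2 * q + 2).choose (q + 2) := by
    rw [← Nat.descFactorial_eq_factorial_mul_choose, Nat.descFactorial_succ]
    exact Nat.mul_le_mul h2 (prod_le_descFactorial d (q + 1))
  zify at h3
  rw [Nat.factorial_succ (q + 1)] at h3
  push_cast at h3
  refine le_of_mul_le_mul_left (a := ((q : ℤ) + 2) * (q + 1).factorial) ?_ (by positivity)
  calc ((q : ℤ) + 2) * (q + 1).factorial * convSum (d + 2 * q + 2 + 1) d (q + 1)
      = 2 * ((q + 2) * 2 ^ q * ∏ α ∈ Icc 1 (q + 1), ((d : ℤ) + 2 * α)) := by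
        rw [mul_assoc, h1]; ring
    _ ≤ 2 * ((q + 1 + 1) * (q + 1).factorial * ((d + 2 * q + 2).choose (q + 2) : ℤ)) := by
        gcongr
    _ = _ := by ring

theorem neg_one_pow_mul_self (e : ℕ) : ((-1 : ℤ) ^ e) * (-1) ^ e = 1 := by
  rw [← mul_pow]; simp

/-- The lower bound for `k = 2 r`. -/
theorem Orth.le_wnorm_even {d r : ℕ} {x : ℕ → ℤ} (hx : Orth d (2 * r) x)
    (h : 2 ^ (2 * r) ≤ d + 2 * r + 1) (hne : ∃ l ≤ d + 2 * r + 1, x l ≠ 0) :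
    2 * convSum (d + 2 * r + 1) d r ≤ wnorm d (2 * r) x := by
  by_cases hmid : ∃ l, r + 1 ≤ l ∧ l ≤ d + r ∧ x l ≠ 0
  · obtain ⟨l, h1, h2, h3⟩ := hmid
    refine le_trans ?_ (hx.two_mul_choose_le_wnorm (by omega) h3)
    have h4 : ((d + 2 * r + 1).choose (r + 1) : ℤ) ≤ ((d + 2 * r + 1).choose l : ℤ) :=
      mod_cast choose_le_choose_of_mem h1 (by omega)
    linarith [convSum_le_choose_even d r h]
  push Not at hmid
  -- on the blocks, `x` is a multiple of the extremal vector
  have hext := orth_extr (d := d) (two_mul r)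
  set b : ℤ := (-1) ^ r * x (d + r + 1) with hb
  have hz := (hx.sub_smul hext b).eq_zero_of_support (r + 1) r (by omega) fun l h1 h2 => by
    rcases le_or_gt l (d + r) with h3 | h3
    · rw [hmid l h1 h3, extr, blk_of_lt (by omega), blk_of_lt (by omega)]; simp
    · obtain rfl : l = d + r + 1 := by omega
      rw [extr_right_end, hb]
      linear_combination (-x (d + r + 1)) * neg_one_pow_mul_self r
  have hw : wnorm d (2 * r) x = |b| * wnorm d (2 * r) (extr d r r) := by
    rw [wnorm, wnorm, mul_sum]
    refine sum_congr rfl fun l hl => ?_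
    rw [mem_range] at hl
    rw [sub_eq_zero.1 (hz l (by omega)), abs_mul]
    ring
  have hb0 : b ≠ 0 := by
    rintro hb0
    obtain ⟨l, hl, hxl⟩ := hne
    have := hz l hl
    simp only [hb0, zero_mul, sub_zero] at this
    exact hxl this
  rw [hw, wnorm_extr (two_mul r), ← two_mul]
  refine le_mul_of_one_le_left (mul_nonneg (by norm_num) ?_) (Int.one_le_abs hb0)
  exact sum_nonneg fun i _ => by positivity

/-- Block entries grow by at least a factor `3` with the block length; this is where `n ≥ 4 q + 4`
enters for `k = 2 q + 1`. -/
theorem three_mul_blk_le {d q : ℕ} (h : 2 * q + 2 ≤ d) (i : ℕ) :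
    3 * blk d q i ≤ blk d (q + 1) i := by
  rcases lt_or_ge q i with hi | hi
  · rw [blk_of_lt hi]; simpa using blk_nonneg d (q + 1) i
  · obtain ⟨t, rfl⟩ := Nat.exists_eq_add_of_le hi
    rw [blk, blk, if_pos hi, if_pos (by omega), show i + t + 1 - i = t + 1 by omega,
      Nat.add_sub_cancel_left]
    have h1 : (d + t + 1).choose d * (t + 1) = (d + t + 1) * (d + t).choose d := by
      have := Nat.add_one_mul_choose_eq (d + t) t
      rw [show d + t + 1 = d + (t + 1) by ring, ← Nat.choose_symm_add, ← Nat.choose_symm_add] at this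
      exact this.symm
    have h2 : 3 * (t + 1) * (d + t).choose d ≤ (d + t + 1) * (d + t).choose d :=
      Nat.mul_le_mul (by omega) le_rfl
    have h3 : 3 * (d + t).choose d ≤ (d + (t + 1)).choose d := by
      refine Nat.le_of_mul_le_mul_right (c := t + 1) ?_ (by omega)
      rw [← add_assoc, h1]
      linarith
    exact_mod_cast h3

/-- Decomposing into symmetric and antisymmetric parts: if `β + γ ≠ 0` the former is at least
`A + B`, and otherwise the latter is at least `2 (A - B)`. -/
theorem add_le_abs_add_abs {A B β γ : ℤ} (hB : 0 ≤ B) (hAB : 3 * B ≤ A)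
    (h : ¬(β = 0 ∧ γ = 0)) : A + B ≤ |β * A + γ * B| + |β * B + γ * A| := by
  by_cases hs : β + γ = 0
  · obtain rfl : γ = -β := by omega
    have hβ : 1 ≤ |β| := Int.one_le_abs fun h0 => h ⟨h0, by omega⟩
    rw [show β * A + -β * B = β * (A - B) by ring, show β * B + -β * A = -(β * (A - B)) by ring,
      abs_neg, abs_mul, abs_of_nonneg (by omega : 0 ≤ A - B)]
    nlinarith
  · refine le_trans ?_ (abs_add_le _ _)
    rw [show β * A + γ * B + (β * B + γ * A) = (β + γ) * (A + B) by ring, abs_mul,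
      abs_of_nonneg (by omega : 0 ≤ A + B)]
    exact le_mul_of_one_le_left (by omega) (Int.one_le_abs hs)

/-- The lower bound for `k = 1`. Here `C(n, 1) = n` is the claimed minimum, so only vectors
supported on `{0, n}` remain to be excluded; the growth estimate used for larger odd `k` fails. -/
theorem Orth.le_wnorm_one {d : ℕ} {x : ℕ → ℤ} (hx : Orth d 1 x)
    (hne : ∃ l ≤ d + 2, x l ≠ 0) :
    convSum (d + 2) d 1 + convSum (d + 2) d 0 ≤ wnorm d 1 x := by
  by_cases hmid : ∃ l, 1 ≤ l ∧ l ≤ d + 1 ∧ x l ≠ 0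
  · obtain ⟨l, h1, h2, h3⟩ := hmid
    refine le_trans ?_ (hx.two_mul_choose_le_wnorm (by omega) h3)
    have h4 : ((d + 2).choose 1 : ℤ) ≤ ((d + 2).choose l : ℤ) :=
      mod_cast choose_le_choose_of_mem h1 (by omega)
    simp only [Nat.choose_one_right] at h4
    push_cast at h4
    simp [convSum, sum_range_succ]
    linarith
  · push Not at hmid
    obtain ⟨l, hl, hxl⟩ := hne
    exact absurd (hx.eq_zero_of_support 1 1 rfl (fun l h1 h2 => hmid l h1 h2) l hl) hxl

/-- The lower bound for `k = 2 q + 1`. -/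
theorem Orth.le_wnorm_odd {d q : ℕ} {x : ℕ → ℤ} (hx : Orth d (2 * q + 1) x)
    (h : 2 ^ (2 * q + 1) ≤ d + 2 * q + 2) (hne : ∃ l ≤ d + 2 * q + 2, x l ≠ 0) :
    convSum (d + 2 * q + 2) d (q + 1) + convSum (d + 2 * q + 2) d q
      ≤ wnorm d (2 * q + 1) x := by
  rcases Nat.eq_zero_or_pos q with rfl | hq
  · simpa using hx.le_wnorm_one (by simpa using hne)
  by_cases hmid : ∃ l, q + 2 ≤ l ∧ l ≤ d + q ∧ x l ≠ 0
  · obtain ⟨l, h1, h2, h3⟩ := hmid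
    refine (convSum_le_choose_odd d q hq h).trans ?_
    refine le_trans ?_ (hx.two_mul_choose_le_wnorm (by omega) h3)
    have h4 : ((d + 2 * q + 2).choose (q + 2) : ℤ) ≤ ((d + 2 * q + 2).choose l : ℤ) :=
      mod_cast choose_le_choose_of_mem h1 (by omega)
    exact mul_le_mul_of_nonneg_left h4 (by norm_num)
  push Not at hmid
  have hd : 2 * q + 2 ≤ d := by
    have h1 := odd_growth q hq
    have h2 : q + 1 ≤ 2 ^ q := Nat.lt_two_pow_self
    nlinarith
  -- on the blocks, `x` is a combination of the extremal vector and its mirror image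
  set β : ℤ := (-1) ^ (q + 1) * x (q + 1) with hβ
  set γ : ℤ := (-1) ^ (q + 1) * x (d + q + 1) with hγ
  have hsgn : ∀ e, e = 2 * (q + 1) → (-1 : ℤ) ^ e = 1 := fun e he => by
    rw [he, pow_mul]; simp
  have hz := ((hx.sub_smul (orth_extr (d := d) (r := q + 1) (q := q) (by omega)) β).sub_smul
    (orth_extr (d := d) (r := q) (q := q + 1) (by omega)) γ).eq_zero_of_support (q + 1) (q + 1)
    (by omega) fun l h1 h2 => by
      rcases eq_or_ne l (q + 1) with rfl | h3
      · rw [extr, extr, blk_self, blk_of_lt (by omega), blk_of_lt (by omega),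
          blk_of_lt (by omega), hsgn (q + 1 + q + 1) (by omega), hβ]
        linear_combination (-x (q + 1)) * neg_one_pow_mul_self (q + 1)
      rcases eq_or_ne l (d + (q + 1)) with rfl | h4
      · rw [extr, blk_of_lt (by omega), blk_of_lt (by omega), ← add_assoc, extr_right_end, hγ]
        linear_combination (-x (d + q + 1)) * neg_one_pow_mul_self (q + 1)
      · rw [hmid l (by omega) (by omega), extr, extr, blk_of_lt (by omega), blk_of_lt (by omega),
          blk_of_lt (by omega), blk_of_lt (by omega)]
        simp
  have hne' : ¬(β = 0 ∧ γ = 0) := by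
    rintro ⟨h1, h2⟩
    obtain ⟨l, hl, hxl⟩ := hne
    have := hz l hl
    simp only [h1, h2, zero_mul, sub_zero] at this
    exact hxl this
  set u : ℕ → ℤ := fun i => β * blk d (q + 1) i + γ * blk d q i with hu
  set v : ℕ → ℤ := fun i => β * blk d q i + γ * blk d (q + 1) i with hv
  have habs : ∀ l ≤ d + (q + 1) + q + 1, |x l| = |u l| + |v (d + (q + 1) + q + 1 - l)| := by
    intro l hl
    rw [← abs_signed_add u v (fun h1 => ?_) (fun h1 => ?_) 0 l (d + (q + 1) + q + 1 - l)]
    · congr 1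
      have h1 := hz l (by omega)
      rw [extr, extr, hsgn (q + 1 + q + 1) (by omega), hsgn (q + (q + 1) + 1) (by omega),
        show d + q + (q + 1) + 1 - l = d + (q + 1) + q + 1 - l by omega] at h1
      rw [hu, hv]
      linear_combination h1
    · simp [hu, blk_of_lt h1, blk_of_lt (show q < l by omega)]
    · simp only [hv]
      rw [blk_of_lt (by omega), blk_of_lt (by omega)]
      simp
  have hw : wnorm d (2 * q + 1) x
      = ∑ l ∈ range (d + (2 * q + 1) + 2),
        ((d + (2 * q + 1) + 1).choose l : ℤ) * (|u l| + |v l|) := by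
    simp only [mul_add, sum_add_distrib]
    rw [← sum_range_reflect
      (fun l => ((d + (2 * q + 1) + 1).choose l : ℤ) * |v l|), ← sum_add_distrib, wnorm]
    refine sum_congr rfl fun l hl => ?_
    rw [mem_range] at hl
    rw [habs l (by omega),
      show d + (2 * q + 1) + 2 - 1 - l = d + (2 * q + 1) + 1 - l by omega,
      Nat.choose_symm (by omega),
      show d + (2 * q + 1) + 1 - l = d + (q + 1) + q + 1 - l by omega]
    ring
  rw [hw, show d + 2 * q + 2 = d + (2 * q + 1) + 1 by ring,
    ← sum_choose_mul_blk _ d (q + 1) (show q + 1 < d + (2 * q + 1) + 2 by omega),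
    ← sum_choose_mul_blk _ d q (show q < d + (2 * q + 1) + 2 by omega), ← sum_add_distrib]
  refine sum_le_sum fun l _ => ?_
  rw [← mul_add]
  exact mul_le_mul_of_nonneg_left
    (add_le_abs_add_abs (blk_nonneg _ _ _) (three_mul_blk_le hd l) hne') (by positivity)

/-! ### The minimum -/

/-- Closed form for the norm of the extremal vector. For odd `k` the two sums merge by
`convSum_succ_left`; for even `k` they coincide. -/
theorem convSum_add_eq (d k : ℕ) :
    ((convSum (d + k + 1) d ((k + 1) / 2) + convSum (d + k + 1) d (k / 2) : ℤ) : ℚ)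
      = 2 * (2 ^ (k / 2) / (Nat.factorial ((k + 1) / 2)) *
        ∏ α ∈ Finset.Icc 1 ((k + 1) / 2), ((d : ℚ) + 2 * (α : ℚ))) := by
  have hfac : ((Nat.factorial ((k + 1) / 2) : ℕ) : ℚ) ≠ 0 := by positivity
  rw [mul_comm_div, ← mul_div_assoc, ← mul_div_assoc, eq_div_iff hfac]
  obtain ⟨q, rfl | rfl⟩ := Nat.even_or_odd' k
  · rw [show (2 * q + 1) / 2 = q by omega, show 2 * q / 2 = q by omega,
      show d + 2 * q + 1 = 2 * q + d + 1 by ring]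
    have h := congrArg (Int.cast : ℤ → ℚ) (factorial_mul_convSum d q)
    push_cast at h ⊢
    linear_combination 2 * h
  · rw [show (2 * q + 1 + 1) / 2 = q + 1 by omega, show (2 * q + 1) / 2 = q by omega,
      ← convSum_succ_left, show d + (2 * q + 1) + 1 + 1 = 2 * (q + 1) + d + 1 by ring]
    have h := congrArg (Int.cast : ℤ → ℚ) (factorial_mul_convSum d (q + 1))
    push_cast at h ⊢
    linear_combination h

/-- For an orthogonal vector the objective is half of the weighted norm. -/
theorem Orth.two_mul_objective {d k : ℕ} {x : ℕ → ℤ} (hx : Orth d k x) :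
    2 * ∑ l ∈ range (d + k + 2), ((d + k + 1).choose l : ℚ) * ((max (x l) 0 : ℤ) : ℚ)
      = (wnorm d k x : ℚ) := by
  have h : 2 * ∑ l ∈ range (d + k + 2), ((d + k + 1).choose l : ℤ) * max (x l) 0
      = wnorm d k x := by
    have h0 := hx.weighted_sum_eq_zero
    rw [← add_eq_left (a := wnorm d k x)] at h0
    rw [← h0, wnorm, ← sum_add_distrib, mul_sum]
    refine sum_congr rfl fun l _ => ?_
    rcases le_total (x l) 0 with h | h
    · rw [max_eq_right h, abs_of_nonpos h]; ring
    · rw [max_eq_left h, abs_of_nonneg h]; ring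
  rw [← h]
  push_cast
  rfl

theorem u1_klocal_integer_optimization (n k : ℕ) (hn2 : 2 ^ k ≤ n) (hn : k + 1 ≤ n) :
    IsLeast
      {s : ℚ | ∃ x : Fin (n + 1) → ℤ, x ≠ 0 ∧
        (∀ j : Fin (k + 1), ∑ l : Fin (n + 1), binomZ (n - k) ((l : ℤ) - (j : ℤ)) * x l = 0) ∧
        s = ∑ l : Fin (n + 1), (n.choose (l : ℕ) : ℚ) * ((max (x l) 0 : ℤ) : ℚ)}
      (2 ^ (k / 2) / (Nat.factorial ((k + 1) / 2)) *
        ∏ α ∈ Finset.Icc 1 ((k + 1) / 2), ((n : ℚ) - (k : ℚ) + 2 * (α : ℚ) - 1)) := by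
  obtain ⟨d, rfl⟩ : ∃ d, n = d + k + 1 := ⟨n - k - 1, by omega⟩
  have hprod : ∏ α ∈ Finset.Icc 1 ((k + 1) / 2),
      (((d + k + 1 : ℕ) : ℚ) - (k : ℚ) + 2 * (α : ℚ) - 1)
      = ∏ α ∈ Finset.Icc 1 ((k + 1) / 2), ((d : ℚ) + 2 * (α : ℚ)) :=
    prod_congr rfl fun α _ => by push_cast; ring
  have hval := convSum_add_eq d k
  rw [hprod, show d + k + 1 - k = d + 1 by omega]
  constructor
  · have hk : k = (k + 1) / 2 + k / 2 := by omega
    have horth := orth_extr (d := d) hk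
    refine ⟨fun l => extr d ((k + 1) / 2) (k / 2) l, fun h0 => ?_, fun j => ?_, ?_⟩
    · have h1 := congrFun h0 ⟨d + (k + 1) / 2 + 1, by omega⟩
      simp [extr_right_end] at h1
    · rw [← horth j (by omega), sum_range]
    · have h1 := horth.two_mul_objective
      rw [wnorm_extr hk, hval, sum_range] at h1
      exact (mul_left_cancel₀ two_ne_zero h1).symm
  · rintro s ⟨x, hx0, hx, rfl⟩
    set y : ℕ → ℤ := fun l => if h : l < d + k + 2 then x ⟨l, h⟩ else 0 with hy
    have hyx : ∀ l : Fin (d + k + 1 + 1), y l = x l := fun l => dif_pos l.2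
    have hyo : Orth d k y := fun j hj => by
      rw [sum_range, ← hx ⟨j, by omega⟩]
      exact sum_congr rfl fun l _ => by rw [← hyx l]
    have hne : ∃ l ≤ d + k + 1, y l ≠ 0 := by
      obtain ⟨l, hl⟩ := Function.ne_iff.1 hx0
      exact ⟨l, by omega, by rw [hyx]; exact hl⟩
    have hobj := hyo.two_mul_objective
    rw [sum_range] at hobj
    simp only [hyx] at hobj
    have hle : convSum (d + k + 1) d ((k + 1) / 2) + convSum (d + k + 1) d (k / 2)
        ≤ wnorm d k y := by
      obtain ⟨q, rfl | rfl⟩ := Nat.even_or_odd' k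
      · rw [show (2 * q + 1) / 2 = q by omega, show 2 * q / 2 = q by omega, ← two_mul]
        exact hyo.le_wnorm_even hn2 hne
      · rw [show (2 * q + 1 + 1) / 2 = q + 1 by omega, show (2 * q + 1) / 2 = q by omega]
        exact hyo.le_wnorm_odd hn2 hne
    have hle' : ((convSum (d + k + 1) d ((k + 1) / 2) + convSum (d + k + 1) d (k / 2) : ℤ) : ℚ)
        ≤ (wnorm d k y : ℚ) := Int.cast_le.2 hle
    rw [hval, ← hobj] at hle'
    exact le_of_mul_le_mul_left hle' two_pos
end

section
/- Let n > k ≥ 1 and let A be a 2^k × 2^k complex matrix commuting with Z^{⊗k}. Then tr(P₊·(A ⊗ I_{2^{n−k}})) = tr(P₋·(A ⊗ I_{2^{n−k}})), where P_± = (I_{2^n} ± Z^{⊗n})/2 are the projectors onto the ±1 eigenspaces of Z^{⊗n}; both traces equal 2^{n−k−1}·tr(A). Consequently, for the ℤ₂ symmetry the vectors (f_0(A⊗I), f_1(A⊗I)) over all ℤ₂-symmetric k-local operators A span the one-dimensional space ℝ·(1,1). -/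
/-! Since `P± = (I ± Z^{⊗n})/2`, everything reduces to two traces. On the diagonal, `A ⊗ I` only
depends on the first `k` bits, so `tr (A ⊗ I) = 2^{n-k} tr A` (`trace_tensorId`). As `k < n`, there
is a qubit on which `A ⊗ I` acts trivially; flipping its bit changes the sign of the diagonal entry
of `Z^{⊗n}` and preserves that of `A ⊗ I`, so `tr (Z^{⊗n} (A ⊗ I)) = 0`
(`trace_kronPow_mul_tensorId`). Hence both sector traces equal `2^{n-k-1} tr A`. The span
contains `(1,1)` because `tr I ≠ 0`. -/

open Matrix

namespace SymDesign

/-- index of the computational basis of `n` qubits -/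
abbrev Q (n : ℕ) := Fin n → Fin 2
/-- linear operators on `n` qubits -/
abbrev Mat (n : ℕ) := Matrix (Q n) (Q n) ℂ

/-- the Pauli-`Z` matrix -/
noncomputable def ZMat : Matrix (Fin 2) (Fin 2) ℂ := !![1, 0; 0, -1]

variable {n : ℕ}

/-- tensor (Kronecker) product `B 0 ⊗ B 1 ⊗ ⋯ ⊗ B (n-1)` of single-qubit operators -/
noncomputable def kronFam (B : Fin n → Matrix (Fin 2) (Fin 2) ℂ) : Mat n :=
  Matrix.of fun v w => ∏ i, B i (v i) (w i)

/-- `A^{⊗n}` -/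
noncomputable def kronPow (n : ℕ) (A : Matrix (Fin 2) (Fin 2) ℂ) : Mat n := kronFam fun _ => A

/-- the single-qubit operator `A` acting on the `i`-th qubit (tensored with identities) -/
noncomputable def onQubit (i : Fin n) (A : Matrix (Fin 2) (Fin 2) ℂ) : Mat n :=
  kronFam fun j => if j = i then A else 1

/-- `Z^tot = ∑ i, Z_i`, the sum of the Pauli-`Z` operators acting on each single qubit -/
noncomputable def Ztot (n : ℕ) : Mat n := ∑ i, onQubit i ZMat

/-- the Kronecker product `A ⊗ I_{2^{n-k}}` of a `k`-qubit operator `A` with the identity on the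
remaining `n - k` qubits -/
noncomputable def tensorId {k n : ℕ} (h : k ≤ n) (A : Matrix (Q k) (Q k) ℂ) : Mat n :=
  Matrix.of fun v w =>
    (if ∀ j : Fin n, k ≤ (j : ℕ) → v j = w j then 1 else 0) *
      A (fun i => v (Fin.castLE h i)) (fun i => w (Fin.castLE h i))

/-- `P₊ = (I + Z^{⊗n})/2`, the projector onto the `+1` eigenspace of `Z^{⊗n}` -/
noncomputable def Pplus (n : ℕ) : Mat n := (2⁻¹ : ℂ) • (1 + kronPow n ZMat)
/-- `P₋ = (I - Z^{⊗n})/2`, the projector onto the `-1` eigenspace of `Z^{⊗n}` -/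
noncomputable def Pminus (n : ℕ) : Mat n := (2⁻¹ : ℂ) • (1 - kronPow n ZMat)

lemma ZMat_apply_of_ne {a b : Fin 2} (h : a ≠ b) : ZMat a b = 0 := by
  fin_cases a <;> fin_cases b <;> simp_all [ZMat]

lemma ZMat_flip (a : Fin 2) : ZMat (a + 1) (a + 1) = -ZMat a a := by
  fin_cases a <;> simp [ZMat]

lemma kronPow_ZMat_eq_diagonal (n : ℕ) :
    kronPow n ZMat = diagonal fun v => ∏ i, ZMat (v i) (v i) := by
  ext v w
  rcases eq_or_ne v w with rfl | h
  · simp [kronPow, kronFam]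
  · obtain ⟨i, hi⟩ := Function.ne_iff.1 h
    rw [diagonal_apply_ne _ h]
    exact Finset.prod_eq_zero (Finset.mem_univ i) (ZMat_apply_of_ne hi)

lemma tensorId_apply_self {k n : ℕ} (h : k ≤ n) (A : Matrix (Q k) (Q k) ℂ) (v : Q n) :
    tensorId h A v v = A (fun i => v (Fin.castLE h i)) (fun i => v (Fin.castLE h i)) := by
  simp [tensorId]

lemma trace_tensorId {k n : ℕ} (h : k ≤ n) (A : Matrix (Q k) (Q k) ℂ) :
    trace (tensorId h A) = 2 ^ (n - k) * trace A := by
  obtain ⟨m, rfl⟩ := Nat.exists_eq_add_of_le h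
  have key (p : Q k × Q m) :
      tensorId h A (Fin.appendEquiv k m p) (Fin.appendEquiv k m p) = A p.1 p.1 := by
    rw [tensorId_apply_self]
    have : (fun i => Fin.appendEquiv k m p (Fin.castLE h i)) = p.1 :=
      funext fun i => Fin.append_left p.1 p.2 i
    rw [this]
  simp only [trace, diag_apply]
  rw [← (Fin.appendEquiv k m).sum_comp]
  simp only [key, Fintype.sum_prod_type]
  simp [Finset.mul_sum]

lemma trace_kronPow_mul_tensorId {k n : ℕ} (h : k < n) (A : Matrix (Q k) (Q k) ℂ) :
    trace (kronPow n ZMat * tensorId h.le A) = 0 := by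
  simp only [kronPow_ZMat_eq_diagonal, trace, diag_apply, diagonal_mul, tensorId_apply_self]
  set f : Q n → ℂ := fun v => (∏ i, ZMat (v i) (v i)) *
    A (fun i => v (Fin.castLE h.le i)) (fun i => v (Fin.castLE h.le i)) with hf
  -- Qubit `k` is the first one outside the support of `A`; adding `e` flips its bit.
  let e : Q n := Pi.single ⟨k, h⟩ 1
  have hflip (v : Q n) : f (v + e) = -f v := by
    have h1 : (fun i => (v + e) (Fin.castLE h.le i)) = fun i => v (Fin.castLE h.le i) := by
      funext i
      have : Fin.castLE h.le i ≠ ⟨k, h⟩ := fun hc => i.2.ne (congrArg Fin.val hc)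
      simp [e, this]
    have h2 : ∏ i, ZMat ((v + e) i) ((v + e) i) = -∏ i, ZMat (v i) (v i) := by
      rw [Fintype.prod_eq_mul_prod_compl ⟨k, h⟩, Fintype.prod_eq_mul_prod_compl ⟨k, h⟩,
        ← neg_mul, ← ZMat_flip]
      congr 1
      · simp [e]
      · refine Finset.prod_congr rfl fun i hi => ?_
        have : i ≠ ⟨k, h⟩ := by simpa using hi
        simp [e, this]
    simp only [hf, h1, h2, neg_mul]
  have hsum : ∑ v, f v = -∑ v, f v := by
    rw [← Finset.sum_neg_distrib, ← Equiv.sum_comp (Equiv.addRight e) f]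
    exact Finset.sum_congr rfl fun v _ => hflip v
  exact self_eq_neg.1 hsum

lemma two_inv_mul_two_pow {k n : ℕ} (h : k < n) : (2⁻¹ : ℂ) * 2 ^ (n - k) = 2 ^ (n - k - 1) := by
  obtain ⟨m, hm⟩ : ∃ m, n - k = m + 1 := ⟨n - k - 1, by omega⟩
  rw [hm, pow_succ, Nat.add_sub_cancel]
  ring

lemma trace_Pplus_mul_tensorId {k n : ℕ} (h : k < n) (A : Matrix (Q k) (Q k) ℂ) :
    trace (Pplus n * tensorId h.le A) = 2 ^ (n - k - 1) * trace A := by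
  rw [Pplus, smul_mul, trace_smul, add_mul, one_mul, trace_add, trace_kronPow_mul_tensorId h,
    trace_tensorId, add_zero, smul_eq_mul, ← mul_assoc, two_inv_mul_two_pow h]

lemma trace_Pminus_mul_tensorId {k n : ℕ} (h : k < n) (A : Matrix (Q k) (Q k) ℂ) :
    trace (Pminus n * tensorId h.le A) = 2 ^ (n - k - 1) * trace A := by
  rw [Pminus, smul_mul, trace_smul, sub_mul, one_mul, trace_sub, trace_kronPow_mul_tensorId h,
    trace_tensorId, sub_zero, smul_eq_mul, ← mul_assoc, two_inv_mul_two_pow h]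

/-- For `n > k ≥ 1` and any `2^k × 2^k` matrix `A` commuting with `Z^{⊗k}`, one has
`tr(P₊·(A ⊗ I)) = tr(P₋·(A ⊗ I))`, both being equal to `2^{n-k-1}·tr(A)`.  Consequently, the
vectors `(f₀(A⊗I), f₁(A⊗I)) = (tr(P₊·(A⊗I)), tr(P₋·(A⊗I)))` over all `ℤ₂`-symmetric `k`-local
operators `A` span the one-dimensional space spanned by `(1,1)`. -/
theorem z2_sector_traces_of_local_operator (n k : ℕ) (hk : 1 ≤ k) (hkn : k < n)
    (A : Matrix (Q k) (Q k) ℂ) (hA : A * kronPow k ZMat = kronPow k ZMat * A) :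
    trace (Pplus n * tensorId hkn.le A) = trace (Pminus n * tensorId hkn.le A) ∧
    trace (Pplus n * tensorId hkn.le A) = 2 ^ (n - k - 1) * trace A ∧
    Submodule.span ℂ {v : ℂ × ℂ | ∃ B : Matrix (Q k) (Q k) ℂ,
        B * kronPow k ZMat = kronPow k ZMat * B ∧
        v = (trace (Pplus n * tensorId hkn.le B), trace (Pminus n * tensorId hkn.le B))} =
      Submodule.span ℂ {((1 : ℂ), (1 : ℂ))} := by
  refine ⟨by rw [trace_Pplus_mul_tensorId hkn, trace_Pminus_mul_tensorId hkn],
    trace_Pplus_mul_tensorId hkn A, le_antisymm (Submodule.span_le.2 ?_) ?_⟩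
  · rintro _ ⟨B, -, rfl⟩
    rw [trace_Pplus_mul_tensorId hkn, trace_Pminus_mul_tensorId hkn]
    exact Submodule.mem_span_singleton.2 ⟨2 ^ (n - k - 1) * trace B, by simp⟩
  · rw [Submodule.span_singleton_le_iff_mem]
    -- The identity realises a nonzero multiple `c • (1,1)`.
    have hc : (2 ^ (n - k - 1) * trace (1 : Matrix (Q k) (Q k) ℂ)) ≠ 0 := by
      simp [trace_one]
    rw [← Submodule.smul_mem_iff _ hc]
    refine Submodule.subset_span ⟨1, by rw [one_mul, mul_one], ?_⟩
    rw [trace_Pplus_mul_tensorId hkn, trace_Pminus_mul_tensorId hkn]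
    simp

end SymDesign
end

section
/- Let n > k ≥ 1 and let A be a 2^k × 2^k complex matrix commuting with Z^tot_k = Σ_{i=1}^k Z_i. Writing A = A_0 ⊕ A_1 ⊕ ⋯ ⊕ A_k in block-diagonal form, where A_j acts on the eigenspace of Z^tot_k with eigenvalue k−2j (equivalently, the span of computational basis states of Hamming weight j), one has for every λ ∈ {0,1,…,n}: tr(P^{(n)}_λ · (A ⊗ I_{2^{n−k}})) = Σ_{j=0}^{k} tr(A_j) · C(n−k, λ−j), where P^{(n)}_λ is the orthogonal projector onto the span of n-qubit computational basis states of Hamming weight λ. -/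
/-!
Only the diagonal entries of `A` matter. In the computational basis,
`tr(P^{(n)}_l (A ⊗ I)) = ∑_v [|v| = l] A_{v', v'}`, where `v'` is the restriction of the bit string
`v` to the first `k` qubits. Splitting `v = (v', u)` gives `|v| = |v'| + |u|`, and for a fixed `v'`
of weight `j` there are `C(n-k, l-j)` strings `u` with `|u| = l - j` (`card_weight`). Grouping the
strings `v'` by their weight `j ≤ k` then yields the block traces `tr(A_j)`.
-/

open Matrix

namespace SymDesign

variable {n : ℕ}

/-- the binomial coefficient `C(a,b)` for `b : ℤ`, with the convention that it vanishes
whenever `b ∉ {0, 1, …, a}` -/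
def binomZ (a : ℕ) (b : ℤ) : ℤ := if 0 ≤ b then (a.choose b.toNat : ℤ) else 0

/-- `P^{(n)}_λ`, the orthogonal projector onto the span of the `n`-qubit computational basis
states of Hamming weight `λ` (the eigenspace of `Z^tot` with eigenvalue `n-2λ`) -/
noncomputable def wtProj (n l : ℕ) : Mat n :=
  Matrix.diagonal fun v : Q n => if ∑ i, (v i : ℕ) = l then 1 else 0

/-- There are `C(m, b)` bit strings of length `m` and Hamming weight `b`. -/
lemma card_weight (m b : ℕ) :
    (∑ u : Q m, if ∑ i, (u i : ℕ) = b then (1 : ℂ) else 0) = (m.choose b : ℂ) := by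
  induction m generalizing b with
  | zero => cases b <;> simp
  | succ m ih =>
    rw [← (Fin.consEquiv fun _ => Fin 2).sum_comp, Fintype.sum_prod_type, Fin.sum_univ_two]
    simp only [Fin.consEquiv_apply, Fin.sum_univ_succ, Fin.cons_zero, Fin.cons_succ]
    cases b with
    | zero => simpa using ih 0
    | succ b =>
      have e (x : ℕ) : 1 + x = b + 1 ↔ x = b := by omega
      simp only [Fin.val_zero, Fin.val_one, zero_add, e, ih]
      rw [Nat.choose_succ_succ]
      push_cast
      ring

lemma card_weight_shift (m j l : ℕ) :
    (∑ u : Q m, if j + ∑ i, (u i : ℕ) = l then (1 : ℂ) else 0) =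
      ((binomZ m ((l : ℤ) - (j : ℤ)) : ℤ) : ℂ) := by
  unfold binomZ
  split_ifs with h
  · have e (x : ℕ) : j + x = l ↔ x = l - j := by omega
    have e' : ((l : ℤ) - (j : ℤ)).toNat = l - j := by omega
    simp only [e, card_weight, e', Int.cast_natCast]
  · have e (x : ℕ) : ¬ j + x = l := by omega
    simp [e]

lemma trace_wtProj_mul (n l : ℕ) (M : Mat n) :
    trace (wtProj n l * M) = ∑ v : Q n, (if ∑ i, (v i : ℕ) = l then 1 else 0) * M v v := by
  simp [trace, wtProj, Matrix.diagonal_mul]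

lemma weight_le (k : ℕ) (v : Q k) : ∑ i, (v i : ℕ) ≤ k := by
  have h := Finset.sum_le_card_nsmul Finset.univ (fun i => (v i : ℕ)) 1
    (fun i _ => by have := (v i).isLt; omega)
  simpa using h

/-- The trace identity holds for every operator on the first `k` of `n` qubits: the projector
`P^{(n)}_l` is diagonal, so off-diagonal blocks of `A` do not contribute. -/
lemma trace_wtProj_mul_tensorId (n k : ℕ) (h : k ≤ n) (A : Matrix (Q k) (Q k) ℂ) (l : ℕ) :
    trace (wtProj n l * tensorId h A) =
      ∑ j ∈ Finset.range (k + 1),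
        trace (wtProj k j * A) * ((binomZ (n - k) ((l : ℤ) - (j : ℤ)) : ℤ) : ℂ) := by
  obtain ⟨m, rfl⟩ := Nat.exists_eq_add_of_le h
  have hc (v : Q k) (u : Q m) :
      (fun i => Fin.append v u (Fin.castLE h i)) = v := by
    funext i
    exact Fin.append_left v u i
  have hL : trace (wtProj (k + m) l * tensorId h A) = ∑ v : Q k,
      A v v * ((binomZ m ((l : ℤ) - ((∑ i, (v i : ℕ) : ℕ) : ℤ)) : ℤ) : ℂ) := by
    rw [trace_wtProj_mul, ← (Fin.appendEquiv k m).sum_comp, Fintype.sum_prod_type]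
    refine Finset.sum_congr rfl fun v _ => ?_
    rw [← card_weight_shift, Finset.mul_sum]
    refine Finset.sum_congr rfl fun u _ => ?_
    simp only [Fin.appendEquiv, Equiv.coe_fn_mk, tensorId, Matrix.of_apply, hc, Fin.sum_univ_add,
      Fin.append_left, Fin.append_right, implies_true, if_true, one_mul]
    exact mul_comm _ _
  rw [hL, Nat.add_sub_cancel_left]
  simp only [trace_wtProj_mul, Finset.sum_mul]
  rw [Finset.sum_comm]
  refine Finset.sum_congr rfl fun v _ => ?_
  -- only the index `j = |v|`, which lies in the range because `|v| ≤ k`, contributes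
  rw [Finset.sum_eq_single (∑ i, (v i : ℕ))]
  · simp
  · intro j _ hj
    simp [hj.symm]
  · intro hv
    exact absurd (Finset.mem_range.2 (Nat.lt_succ_of_le (weight_le k v))) hv

/-- For `n > k ≥ 1` and a `2^k × 2^k` matrix `A` commuting with `Z^tot_k` (so that `A` is block
diagonal, the block `A_j` acting on the Hamming-weight-`j` eigenspace having trace
`tr(P^{(k)}_j·A)`), for every `λ ∈ {0,…,n}`:
`tr(P^{(n)}_λ·(A ⊗ I)) = ∑_{j=0}^k tr(A_j)·C(n-k, λ-j)`. -/
theorem u1_sector_traces_of_local_operator (n k : ℕ) (hk : 1 ≤ k) (hkn : k < n)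
    (A : Matrix (Q k) (Q k) ℂ) (hA : A * Ztot k = Ztot k * A) (l : ℕ) (hl : l ≤ n) :
    trace (wtProj n l * tensorId hkn.le A) =
      ∑ j ∈ Finset.range (k + 1),
        trace (wtProj k j * A) * ((binomZ (n - k) ((l : ℤ) - (j : ℤ)) : ℤ) : ℂ) := by
  exact trace_wtProj_mul_tensorId n k hkn.le A l

end SymDesign
end

section
/- Let n ≥ 4 and define d ∈ ℤ^{n+1} (indexed by λ = 0,…,n) by d_0 = n−2, d_1 = −1, d_{n−1} = 1, d_n = −(n−2), and d_λ = 0 otherwise. Then d is orthogonal to each of the three vectors c_j = (C(n−2, λ−j))_{λ=0}^n for j = 0, 1, 2, and Σ_{λ=0}^n C(n,λ)·max(d_λ,0) = 2(n−1). -/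
/-- the lattice vector `d = (n-2, -1, 0, …, 0, 1, -(n-2))` of the `U(1)`-symmetric `2`-local
case, indexed by `λ ∈ {0,…,n}` -/
def dvec (n : ℕ) : Fin (n + 1) → ℤ := fun l =>
  if (l : ℕ) = 0 then (n : ℤ) - 2
  else if (l : ℕ) = 1 then -1
  else if (l : ℕ) = n - 1 then 1
  else if (l : ℕ) = n then -((n : ℤ) - 2)
  else 0

/-- A sum against `g ∘ d` with `g 0 = 0` (such as `g = id` or the positive part) only sees the four
indices in the support of `d`. Writing `n = m + 4` avoids truncated subtraction. -/
lemma sum_mul_dvec (m : ℕ) (f : ℕ → ℤ) (g : ℤ → ℤ) (hg : g 0 = 0) :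
    ∑ l : Fin (m + 4 + 1), f l * g (dvec (m + 4) l)
      = f 0 * g (m + 2) + f 1 * g (-1) + f (m + 3) * g 1 + f (m + 4) * g (-(m + 2)) := by
  rw [Fin.sum_univ_castSucc, Fin.sum_univ_castSucc, Fin.sum_univ_succ, Fin.sum_univ_succ]
  have hmid : ∀ i : Fin (m + 1),
      dvec (m + 4) i.succ.succ.castSucc.castSucc = 0 := by
    intro i
    have := i.isLt
    simp only [dvec, Fin.val_castSucc, Fin.val_succ]
    grind
  have h0 : (m : ℤ) + 4 - 2 = m + 2 := by ring
  simp only [hmid, hg, mul_zero, Finset.sum_const_zero]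
  simp [dvec, h0]

/-- The vector `d` with `d_0 = n-2`, `d_1 = -1`, `d_{n-1} = 1`, `d_n = -(n-2)` and `d_λ = 0`
otherwise is orthogonal to the vectors `c_j = (C(n-2, λ-j))_λ`, `j = 0,1,2`, and its weighted
positive part is `⟨m, d^+⟩ = ∑_λ C(n,λ)·max(d_λ,0) = 2(n-1)`. -/
theorem u1_2local_lattice_vector (n : ℕ) (hn : 4 ≤ n) :
    (∀ j : Fin 3, ∑ l : Fin (n + 1), binomZ (n - 2) ((l : ℤ) - (j : ℤ)) * dvec n l = 0) ∧
    ∑ l : Fin (n + 1), (n.choose (l : ℕ) : ℤ) * max (dvec n l) 0 = 2 * ((n : ℤ) - 1) := by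
  obtain ⟨m, rfl⟩ := Nat.exists_eq_add_of_le' hn
  have hsub : m + 4 - 2 = m + 2 := by omega
  refine ⟨fun j => ?_, ?_⟩
  · have h := sum_mul_dvec m (fun l => binomZ (m + 2) ((l : ℤ) - (j : ℤ))) id rfl
    simp only [id] at h
    rw [hsub, h]
    -- The values of the row `m + 2` that occur as entries of `c_j` at `0`, `1`, `n-1`, `n`.
    have hneg : ∀ b : ℤ, b < 0 → binomZ (m + 2) b = 0 := fun b hb => by simp [binomZ, hb]
    have hnat : ∀ k : ℕ, binomZ (m + 2) k = (m + 2).choose k := fun k => by simp [binomZ]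
    have e0 : binomZ (m + 2) 0 = 1 := by simpa using hnat 0
    have e1 : binomZ (m + 2) 1 = m + 2 := by simpa using hnat 1
    have t1 : binomZ (m + 2) (m + 1) = m + 2 := by
      have := hnat (m + 1)
      rw [Nat.choose_succ_self_right (m + 1)] at this
      push_cast at this
      linarith
    have t2 : binomZ (m + 2) (m + 2) = 1 := by simpa using hnat (m + 2)
    have t3 : binomZ (m + 2) (m + 3) = 0 := by simpa using hnat (m + 3)
    have t4 : binomZ (m + 2) (m + 4) = 0 := by
      have := hnat (m + 4)
      rw [Nat.choose_eq_zero_of_lt (by omega)] at this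
      simpa using this
    have s31 : (m : ℤ) + 3 - 1 = m + 2 := by ring
    have s32 : (m : ℤ) + 3 - 2 = m + 1 := by ring
    have s41 : (m : ℤ) + 4 - 1 = m + 3 := by ring
    have s42 : (m : ℤ) + 4 - 2 = m + 2 := by ring
    fin_cases j
    · simp [e0, e1, t3, t4]
    · simp [hneg (-1), e0, t2, t3, s31, s41]
    · simp [hneg (-1), hneg (-2), t1, t2, s32, s42]
  · have h := sum_mul_dvec m (fun l => ((m + 4).choose l : ℤ)) (fun x => max x 0) rfl
    rw [h]
    have hpos : max ((m : ℤ) + 2) 0 = m + 2 := max_eq_left (by positivity)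
    have hneg : max (-((m : ℤ) + 2)) 0 = 0 := max_eq_right (by linarith [Int.natCast_nonneg m])
    have hc : ((m + 4).choose (m + 3) : ℤ) = m + 4 := by
      rw [Nat.choose_succ_self_right (m + 3)]; push_cast; ring
    rw [hpos, hneg, hc]
    simp
    ring
end

section
/- Let n ≥ 4 and let c_j = (C(n−2, λ−j))_{λ=0}^n ∈ ℤ^{n+1} for j = 0, 1, 2. The set of integer vectors x ∈ ℤ^{n+1} satisfying ⟨c_j, x⟩ = 0 for j = 0,1,2 and x_λ = 0 for all λ ∉ {0, 1, n−1, n} is exactly the one-dimensional lattice ℤ·d, where d_0 = n−2, d_1 = −1, d_{n−1} = 1, d_n = −(n−2), and d_λ = 0 otherwise. -/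
theorem binomZ_eq {a : ℕ} {b : ℤ} (k : ℕ) (h : b = k) : binomZ a b = a.choose k := by
  subst h; simp [binomZ]

theorem binomZ_neg {a : ℕ} {b : ℤ} (h : b < 0) : binomZ a b = 0 := by
  simp [binomZ, h]

theorem sum_of_support (n : ℕ) (hn : 4 ≤ n) (f x : Fin (n + 1) → ℤ)
    (hx : ∀ l : Fin (n + 1), (l : ℕ) ≠ 0 → (l : ℕ) ≠ 1 → (l : ℕ) ≠ n - 1 → (l : ℕ) ≠ n →
      x l = 0) :
    ∑ l, f l * x l =
      f ⟨0, by omega⟩ * x ⟨0, by omega⟩ + f ⟨1, by omega⟩ * x ⟨1, by omega⟩ +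
      f ⟨n - 1, by omega⟩ * x ⟨n - 1, by omega⟩ + f ⟨n, by omega⟩ * x ⟨n, by omega⟩ := by
  have h : ∑ l ∈ ({⟨0, by omega⟩, ⟨1, by omega⟩, ⟨n - 1, by omega⟩, ⟨n, by omega⟩} :
      Finset (Fin (n + 1))), f l * x l = ∑ l, f l * x l := by
    refine Finset.sum_subset (Finset.subset_univ _) fun l _ hl => ?_
    simp only [Finset.mem_insert, Finset.mem_singleton, Fin.ext_iff, not_or] at hl
    rw [hx l hl.1 hl.2.1 hl.2.2.1 hl.2.2.2, mul_zero]
  rw [← h, Finset.sum_insert, Finset.sum_insert, Finset.sum_insert, Finset.sum_singleton]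
  · ring
  all_goals
    simp only [Finset.mem_insert, Finset.mem_singleton, Fin.ext_iff]
    omega

/-- For vectors supported on `{0, 1, n-1, n}`, orthogonality to `c_0, c_1, c_2` is a bidiagonal
linear system. -/
theorem orthogonal_iff (n : ℕ) (hn : 4 ≤ n) (x : Fin (n + 1) → ℤ)
    (hx : ∀ l : Fin (n + 1), (l : ℕ) ≠ 0 → (l : ℕ) ≠ 1 → (l : ℕ) ≠ n - 1 → (l : ℕ) ≠ n →
      x l = 0) :
    (∀ j : Fin 3, ∑ l : Fin (n + 1), binomZ (n - 2) ((l : ℤ) - (j : ℤ)) * x l = 0) ↔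
      x ⟨0, by omega⟩ + ((n : ℤ) - 2) * x ⟨1, by omega⟩ = 0 ∧
      x ⟨1, by omega⟩ + x ⟨n - 1, by omega⟩ = 0 ∧
      ((n : ℤ) - 2) * x ⟨n - 1, by omega⟩ + x ⟨n, by omega⟩ = 0 := by
  obtain ⟨m, rfl⟩ : ∃ m, n = m + 4 := ⟨n - 4, by omega⟩
  have e : m + 4 - 2 = m + 2 := rfl
  have e1 : m + 4 - 1 = m + 3 := rfl
  have c1 : (m + 2).choose (m + 1) = m + 2 := Nat.choose_succ_self_right (m + 1)
  have c2 : (m + 2).choose (m + 3) = 0 := Nat.choose_eq_zero_of_lt (by omega)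
  have c3 : (m + 2).choose (m + 4) = 0 := Nat.choose_eq_zero_of_lt (by omega)
  simp only [sum_of_support _ hn _ x hx, Fin.forall_fin_succ, e, e1]
  simp only [Fin.val_zero, Fin.val_succ, IsEmpty.forall_iff, and_true]
  rw [binomZ_eq 0 (by simp), binomZ_eq 1 (by simp), binomZ_eq (m + 3) (by simp),
    binomZ_eq (m + 4) (by simp),
    binomZ_neg (by simp), binomZ_eq 0 (by simp), binomZ_eq (m + 2) (by push_cast; ring),
    binomZ_eq (m + 3) (by push_cast; ring),
    binomZ_neg (by simp), binomZ_neg (by simp), binomZ_eq (m + 1) (by push_cast; ring),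
    binomZ_eq (m + 2) (by push_cast; ring), c1, c2, c3]
  have e2 : ((m + 4 : ℕ) : ℤ) - 2 = m + 2 := by push_cast; ring
  rw [e2]
  simp

/-- The integer vectors orthogonal to `c_j = (C(n-2, λ-j))_λ`, `j = 0,1,2`, and supported on
`Λ' = {0, 1, n-1, n}` form exactly the one-dimensional lattice `ℤ·d` where
`d = (n-2, -1, 0, …, 0, 1, -(n-2))`. -/
theorem u1_2local_one_dimensional_lattice (n : ℕ) (hn : 4 ≤ n) (x : Fin (n + 1) → ℤ) :
    ((∀ j : Fin 3, ∑ l : Fin (n + 1), binomZ (n - 2) ((l : ℤ) - (j : ℤ)) * x l = 0) ∧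
      (∀ l : Fin (n + 1), (l : ℕ) ≠ 0 → (l : ℕ) ≠ 1 → (l : ℕ) ≠ n - 1 → (l : ℕ) ≠ n →
        x l = 0)) ↔
      ∃ a : ℤ, x = fun l => a * dvec n l := by
  have d0 : dvec n ⟨0, by omega⟩ = (n : ℤ) - 2 := by simp [dvec]
  have d1 : dvec n ⟨1, by omega⟩ = -1 := by simp [dvec]
  have d2 : dvec n ⟨n - 1, by omega⟩ = 1 := by
    simp only [dvec]
    rw [if_neg (by omega), if_neg (by omega), if_pos trivial]
  have d3 : dvec n ⟨n, by omega⟩ = -((n : ℤ) - 2) := by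
    simp only [dvec]
    rw [if_neg (by omega), if_neg (by omega), if_neg (by omega), if_pos trivial]
  have d4 : ∀ l : Fin (n + 1), (l : ℕ) ≠ 0 → (l : ℕ) ≠ 1 → (l : ℕ) ≠ n - 1 → (l : ℕ) ≠ n →
      dvec n l = 0 := by
    intro l h0 h1 h2 h3
    simp [dvec, h0, h1, h2, h3]
  have p0 : 0 < n + 1 := by omega
  have p1 : 1 < n + 1 := by omega
  have p2 : n - 1 < n + 1 := by omega
  have p3 : n < n + 1 := by omega
  constructor
  · rintro ⟨h, hx⟩
    obtain ⟨h0, h1, h2⟩ := (orthogonal_iff n hn x hx).1 h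
    refine ⟨x ⟨n - 1, by omega⟩, funext fun l => ?_⟩
    by_cases l0 : (l : ℕ) = 0
    · obtain rfl : l = ⟨0, p0⟩ := Fin.ext l0
      rw [d0]; linear_combination h0 - ((n : ℤ) - 2) * h1
    by_cases l1 : (l : ℕ) = 1
    · obtain rfl : l = ⟨1, p1⟩ := Fin.ext l1
      rw [d1]; linear_combination h1
    by_cases l2 : (l : ℕ) = n - 1
    · obtain rfl : l = ⟨n - 1, p2⟩ := Fin.ext l2
      rw [d2, mul_one]
    by_cases l3 : (l : ℕ) = n
    · obtain rfl : l = ⟨n, p3⟩ := Fin.ext l3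
      rw [d3]; linear_combination h2
    rw [hx l l0 l1 l2 l3, d4 l l0 l1 l2 l3, mul_zero]
  · rintro ⟨a, rfl⟩
    have hx : ∀ l : Fin (n + 1), (l : ℕ) ≠ 0 → (l : ℕ) ≠ 1 → (l : ℕ) ≠ n - 1 → (l : ℕ) ≠ n →
        (fun l => a * dvec n l) l = 0 := fun l h0 h1 h2 h3 => by
      simp only [d4 l h0 h1 h2 h3, mul_zero]
    refine ⟨(orthogonal_iff n hn _ hx).2 ?_, hx⟩
    simp only [d0, d1, d2, d3]
    refine ⟨?_, ?_, ?_⟩ <;> ring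
end

section
/- Let n ≥ 5 and let c_j = (C(n−4, λ−j))_{λ=0}^n ∈ ℤ^{n+1} for j = 0, 1, 2, 3, 4. Then the minimum of Σ_{λ=0}^n C(n,λ)·max(x_λ,0) over all nonzero integer vectors x ∈ ℤ^{n+1} orthogonal to c_0,…,c_4 equals 2(n−1)(n−3). -/
lemma binomZ_sub (a l j : ℕ) :
    binomZ a ((l : ℤ) - (j : ℤ)) = if j ≤ l then (a.choose (l - j) : ℤ) else 0 := by
  unfold binomZ
  by_cases h : j ≤ l
  · have h1 : (0 : ℤ) ≤ (l : ℤ) - j := by omega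
    have h2 : ((l : ℤ) - j).toNat = l - j := by omega
    rw [if_pos h1, if_pos h, h2]
  · have h1 : ¬ (0 : ℤ) ≤ (l : ℤ) - j := by omega
    rw [if_neg h1, if_neg h]

/-- The pairing `⟨c_j, f⟩` for `n = m + 5`. -/
def pairing (m : ℕ) (f : ℕ → ℤ) (j : ℕ) : ℤ :=
  ∑ l ∈ Finset.range (m + 6), (if j ≤ l then ((m + 1).choose (l - j) : ℤ) else 0) * f l

/-- The objective `∑_λ C(n,λ) max(f_λ, 0)` for `n = m + 5`. -/
def objective (m : ℕ) (f : ℕ → ℤ) : ℤ :=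
  ∑ l ∈ Finset.range (m + 6), ((m + 5).choose l : ℤ) * max (f l) 0

lemma sum_six (m : ℕ) (g : ℕ → ℤ) (hg : ∀ l, 3 ≤ l → l ≤ m + 2 → g l = 0) :
    ∑ l ∈ Finset.range (m + 6), g l =
      g 0 + g 1 + g 2 + g (m + 3) + g (m + 4) + g (m + 5) := by
  have h0 : ∑ l ∈ Finset.range m, g (l + 1 + 1 + 1) = 0 :=
    Finset.sum_eq_zero fun l hl => hg _ (by omega) (by have := Finset.mem_range.1 hl; omega)
  rw [Finset.sum_range_succ, Finset.sum_range_succ, Finset.sum_range_succ,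
    Finset.sum_range_succ', Finset.sum_range_succ', Finset.sum_range_succ', h0]
  simp only [zero_add]
  ring

lemma two_mul_choose_two (a : ℕ) : 2 * ((a + 1).choose 2 : ℤ) = (a + 1) * a := by
  induction a with
  | zero => simp
  | succ k ih =>
    rw [Nat.choose_succ_succ' (k + 1) 1]
    push_cast
    simp only [Nat.choose_one_right]
    push_cast
    linarith

/-- On vectors vanishing on `{3, …, n-3}` the five constraints decouple into two triangular
systems, joined by the constraint for `j = 2`. -/
lemma constraints_iff (m : ℕ) (f : ℕ → ℤ) (hf : ∀ l, 3 ≤ l → l ≤ m + 2 → f l = 0) :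
    (∀ j < 5, pairing m f j = 0) ↔
      f 0 = (m + 2).choose 2 * f 2 ∧ f 1 = -(m + 1) * f 2 ∧ f (m + 3) = - f 2 ∧
      f (m + 4) = (m + 1) * f 2 ∧ f (m + 5) = - (m + 2).choose 2 * f 2 := by
  have hs : ∀ j, pairing m f j = _ := fun j => sum_six m _ (fun l h1 h2 => by
    rw [hf l h1 h2, mul_zero])
  have hc : (if 4 ≤ m + 3 then ((m + 1).choose (m + 3 - 4) : ℤ) else 0) = (m + 1).choose 2 := by
    rcases m with _ | k
    · simp
    · rw [if_pos (by omega), ← Nat.choose_symm_of_eq_add (n := k + 1 + 1) (a := k) (b := 2) rfl]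
      congr 2
  have z3 : (m + 1).choose (m + 3) = 0 := Nat.choose_eq_zero_of_lt (by omega)
  have z4 : (m + 1).choose (m + 4) = 0 := Nat.choose_eq_zero_of_lt (by omega)
  have z5 : (m + 1).choose (m + 5) = 0 := Nat.choose_eq_zero_of_lt (by omega)
  have e0 : pairing m f 0 = f 0 + (m + 1) * f 1 + (m + 1).choose 2 * f 2 := by
    rw [hs]; simp [z3, z4, z5]
  have e1 : pairing m f 1 = f 1 + (m + 1) * f 2 := by
    rw [hs]; simp [z3, z4]
  have e2 : pairing m f 2 = f 2 + f (m + 3) := by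
    rw [hs]; simp [z3]
  have e3 : pairing m f 3 = (m + 1) * f (m + 3) + f (m + 4) := by
    rw [hs]; simp
  have e4 : pairing m f 4 =
      (m + 1).choose 2 * f (m + 3) + (m + 1) * f (m + 4) + f (m + 5) := by
    rw [hs, hc]; simp
  have hT := two_mul_choose_two (m + 1)
  have hU := two_mul_choose_two m
  have hTU : ((m + 2).choose 2 : ℤ) = (m + 1) ^ 2 - (m + 1).choose 2 := by
    push_cast at hT hU
    linarith
  rw [hTU]
  constructor
  · intro h
    have h0 := e0 ▸ h 0 (by omega)
    have h1 := e1 ▸ h 1 (by omega)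
    have h2 := e2 ▸ h 2 (by omega)
    have h3 := e3 ▸ h 3 (by omega)
    have h4 := e4 ▸ h 4 (by omega)
    have g1 : f 1 = -(m + 1) * f 2 := by linarith
    have g3 : f (m + 3) = - f 2 := by linarith
    have g4 : f (m + 4) = (m + 1) * f 2 := by rw [g3] at h3; linarith
    refine ⟨?_, g1, g3, g4, ?_⟩
    · rw [g1] at h0; linarith
    · rw [g3, g4] at h4; linarith
  · rintro ⟨g0, g1, g3, g4, g5⟩ j hj
    interval_cases j
    · rw [e0, g0, g1]; ring
    · rw [e1, g1]; ring
    · rw [e2, g3]; ring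
    · rw [e3, g3, g4]; ring
    · rw [e4, g3, g4, g5]; ring

lemma objective_six (m : ℕ) (f : ℕ → ℤ) (hf : ∀ l, 3 ≤ l → l ≤ m + 2 → f l = 0)
    (h : ∀ j < 5, pairing m f j = 0) :
    objective m f = 2 * (m + 4) * (m + 2) * |f 2| := by
  obtain ⟨g0, g1, g3, g4, g5⟩ := (constraints_iff m f hf).1 h
  have hs : objective m f = _ := sum_six m _ (fun l h1 h2 => by rw [hf l h1 h2]; simp)
  rw [hs, g0, g1, g3, g4, g5]
  have c3 : (m + 5).choose (m + 3) = (m + 5).choose 2 :=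
    Nat.choose_symm_of_eq_add (by omega)
  have c4 : (m + 5).choose (m + 4) = m + 5 := by simp
  rw [c3, c4]
  have hT := two_mul_choose_two (m + 1)
  have hB := two_mul_choose_two (m + 4)
  push_cast at hT hB
  have pT : (0 : ℤ) ≤ (m + 2).choose 2 := by positivity
  have pm : (0 : ℤ) ≤ m + 1 := by positivity
  simp only [Nat.choose_zero_right, Nat.choose_one_right, Nat.choose_self]
  generalize f 2 = k
  generalize ((m + 2).choose 2 : ℤ) = T at *
  generalize ((m + 5).choose 2 : ℤ) = B at *
  push_cast
  rcases le_total 0 k with hk | hk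
  · rw [abs_of_nonneg hk, max_eq_left (mul_nonneg pT hk), max_eq_left hk,
      max_eq_right (by nlinarith : -((m : ℤ) + 1) * k ≤ 0), max_eq_right (by linarith : -k ≤ 0),
      max_eq_left (mul_nonneg pm hk), max_eq_right (by nlinarith : -T * k ≤ 0)]
    have : 2 * (T * k + B * k + (m + 5) * (m + 1) * k) = 2 * (2 * (m + 4) * (m + 2) * k) := by
      linear_combination k * (hT + hB)
    linarith
  · rw [abs_of_nonpos hk, max_eq_right (by nlinarith : T * k ≤ 0), max_eq_right hk,
      max_eq_left (by nlinarith : 0 ≤ -((m : ℤ) + 1) * k), max_eq_left (by linarith : 0 ≤ -k),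
      max_eq_right (by nlinarith : ((m : ℤ) + 1) * k ≤ 0), max_eq_left (by nlinarith : 0 ≤ -T * k)]
    have : 2 * (T * k + B * k + (m + 5) * (m + 1) * k) = 2 * (2 * (m + 4) * (m + 2) * k) := by
      linear_combination k * (hT + hB)
    linarith

lemma pairing_neg (m : ℕ) (f : ℕ → ℤ) (j : ℕ) : pairing m (-f) j = - pairing m f j := by
  simp [pairing, Finset.sum_neg_distrib]

lemma vandermonde_four (m l : ℕ) :
    ((m + 5).choose l : ℤ) = ∑ j ∈ Finset.range 5, ((4 : ℕ).choose j : ℤ) *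
      (if j ≤ l then ((m + 1).choose (l - j) : ℤ) else 0) := by
  rcases l with _ | _ | _ | _ | l <;>
    simp [Finset.sum_range_succ, Nat.choose_succ_succ', Nat.choose] <;> ring

lemma weighted_sum_eq_zero (m : ℕ) (f : ℕ → ℤ) (h : ∀ j < 5, pairing m f j = 0) :
    ∑ l ∈ Finset.range (m + 6), ((m + 5).choose l : ℤ) * f l = 0 := by
  have : ∑ l ∈ Finset.range (m + 6), ((m + 5).choose l : ℤ) * f l =
      ∑ j ∈ Finset.range 5, ((4 : ℕ).choose j : ℤ) * pairing m f j := by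
    simp only [vandermonde_four, pairing, Finset.sum_mul, Finset.mul_sum]
    rw [Finset.sum_comm]
    simp only [mul_assoc]
  rw [this]
  exact Finset.sum_eq_zero fun j hj => by rw [h j (Finset.mem_range.1 hj), mul_zero]

lemma objective_neg (m : ℕ) (f : ℕ → ℤ) (h : ∀ j < 5, pairing m f j = 0) :
    objective m (-f) = objective m f := by
  have h0 := weighted_sum_eq_zero m f h
  rw [← sub_eq_zero, ← neg_eq_zero, ← h0]
  simp only [objective]
  rw [← Finset.sum_sub_distrib, ← Finset.sum_neg_distrib]
  refine Finset.sum_congr rfl fun l _ => ?_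
  rw [← mul_sub, ← mul_neg, Pi.neg_apply]
  congr 1
  rcases le_total 0 (f l) with hk | hk
  · rw [max_eq_left hk, max_eq_right (by linarith)]; ring
  · rw [max_eq_right hk, max_eq_left (by linarith)]; ring

lemma choose_three_le (n l : ℕ) (h3 : 3 ≤ l) (hl : l + 3 ≤ n) : n.choose 3 ≤ n.choose l := by
  have key : ∀ k, 3 ≤ k → 2 * k ≤ n → n.choose 3 ≤ n.choose k := by
    intro k hk
    induction k, hk using Nat.le_induction with
    | base => exact fun _ => le_rfl
    | succ k hk ih =>
      exact fun h => (ih (by omega)).trans (Nat.choose_le_succ_of_lt_half_left (by omega))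
  rcases le_total (2 * l) n with h | h
  · exact key l h3 h
  · rw [← Nat.choose_symm (show l ≤ n by omega)]
    exact key _ (by omega) (by omega)

lemma six_mul_choose_three (a : ℕ) : 6 * ((a + 2).choose 3 : ℤ) = (a + 2) * (a + 1) * a := by
  induction a with
  | zero => simp
  | succ k ih =>
    rw [Nat.choose_succ_succ' (k + 2) 2]
    have := two_mul_choose_two (k + 1)
    push_cast at this ⊢
    linarith

set_option maxHeartbeats 4000000 in
/-- The bound for `6 ≤ n ≤ 10` when a middle coordinate is positive. The linear relaxation suffices
for `n = 6, 9, 10`; for `n = 7, 8` its value can be too small, and splitting on the sign of one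
further integer coordinate closes the gap. -/
lemma middle_bound_small (m : ℕ) (hm : m < 6) (f : ℕ → ℤ) (h : ∀ j < 5, pairing m f j = 0) (l : ℕ)
    (h3 : 3 ≤ l) (hl : l ≤ m + 2) (hpos : 1 ≤ f l) :
    2 * ((m : ℤ) + 4) * (m + 2) ≤ objective m f := by
  have e0 := h 0 (by omega)
  have e1 := h 1 (by omega)
  have e2 := h 2 (by omega)
  have e3 := h 3 (by omega)
  have e4 := h 4 (by omega)
  have hp : ∀ i, 0 ≤ max (f i) 0 := fun i => le_max_right _ _
  have hx : ∀ i, f i ≤ max (f i) 0 := fun i => le_max_left _ _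
  have s3 : f 3 ≤ -1 ∨ f 3 = 0 ∨ 1 ≤ f 3 := by omega
  have s4 : f 4 ≤ -1 ∨ f 4 = 0 ∨ 1 ≤ f 4 := by omega
  unfold objective
  unfold pairing at e0 e1 e2 e3 e4
  clear h
  interval_cases m
  · omega
  all_goals
    simp [Finset.sum_range_succ, Nat.choose] at e0 e1 e2 e3 e4 ⊢
    interval_cases l
  · linarith [hp 0, hp 1, hp 2, hp 3, hp 4, hp 5, hp 6,
      hx 0, hx 1, hx 2, hx 3, hx 4, hx 5, hx 6]
  · rcases s4 with s | s | s <;>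
      linarith [hp 0, hp 1, hp 2, hp 3, hp 4, hp 5, hp 6, hp 7,
        hx 0, hx 1, hx 2, hx 3, hx 4, hx 5, hx 6, hx 7]
  · rcases s3 with s | s | s <;>
      linarith [hp 0, hp 1, hp 2, hp 3, hp 4, hp 5, hp 6, hp 7,
        hx 0, hx 1, hx 2, hx 3, hx 4, hx 5, hx 6, hx 7]
  · rcases s4 with s | s | s <;>
      linarith [hp 0, hp 1, hp 2, hp 3, hp 4, hp 5, hp 6, hp 7, hp 8,
        hx 0, hx 1, hx 2, hx 3, hx 4, hx 5, hx 6, hx 7, hx 8]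
  · linarith [hp 0, hp 1, hp 2, hp 3, hp 4, hp 5, hp 6, hp 7, hp 8,
      hx 0, hx 1, hx 2, hx 3, hx 4, hx 5, hx 6, hx 7, hx 8]
  · rcases s4 with s | s | s <;>
      linarith [hp 0, hp 1, hp 2, hp 3, hp 4, hp 5, hp 6, hp 7, hp 8,
        hx 0, hx 1, hx 2, hx 3, hx 4, hx 5, hx 6, hx 7, hx 8]
  all_goals clear s3 s4
  · linarith [hp 0, hp 1, hp 2, hp 3, hp 4, hp 5, hp 6, hp 7, hp 8, hp 9,
      hx 0, hx 1, hx 2, hx 3, hx 4, hx 5, hx 6, hx 7, hx 8, hx 9]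
  · linarith [hp 0, hp 1, hp 2, hp 3, hp 4, hp 5, hp 6, hp 7, hp 8, hp 9,
      hx 0, hx 1, hx 2, hx 3, hx 4, hx 5, hx 6, hx 7, hx 8, hx 9]
  · linarith [hp 0, hp 1, hp 2, hp 3, hp 4, hp 5, hp 6, hp 7, hp 8, hp 9,
      hx 0, hx 1, hx 2, hx 3, hx 4, hx 5, hx 6, hx 7, hx 8, hx 9]
  · linarith [hp 0, hp 1, hp 2, hp 3, hp 4, hp 5, hp 6, hp 7, hp 8, hp 9,
      hx 0, hx 1, hx 2, hx 3, hx 4, hx 5, hx 6, hx 7, hx 8, hx 9]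
  · linarith [hp 0, hp 1, hp 2, hp 3, hp 4, hp 5, hp 6, hp 7, hp 8, hp 9, hp 10,
      hx 0, hx 1, hx 2, hx 3, hx 4, hx 5, hx 6, hx 7, hx 8, hx 9, hx 10]
  · linarith [hp 0, hp 1, hp 2, hp 3, hp 4, hp 5, hp 6, hp 7, hp 8, hp 9, hp 10,
      hx 0, hx 1, hx 2, hx 3, hx 4, hx 5, hx 6, hx 7, hx 8, hx 9, hx 10]
  · linarith [hp 0, hp 1, hp 2, hp 3, hp 4, hp 5, hp 6, hp 7, hp 8, hp 9, hp 10,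
      hx 0, hx 1, hx 2, hx 3, hx 4, hx 5, hx 6, hx 7, hx 8, hx 9, hx 10]
  · linarith [hp 0, hp 1, hp 2, hp 3, hp 4, hp 5, hp 6, hp 7, hp 8, hp 9, hp 10,
      hx 0, hx 1, hx 2, hx 3, hx 4, hx 5, hx 6, hx 7, hx 8, hx 9, hx 10]
  · linarith [hp 0, hp 1, hp 2, hp 3, hp 4, hp 5, hp 6, hp 7, hp 8, hp 9, hp 10,
      hx 0, hx 1, hx 2, hx 3, hx 4, hx 5, hx 6, hx 7, hx 8, hx 9, hx 10]

lemma middle_bound (m : ℕ) (f : ℕ → ℤ) (h : ∀ j < 5, pairing m f j = 0) (l : ℕ) (h3 : 3 ≤ l)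
    (hl : l ≤ m + 2) (hpos : 1 ≤ f l) : 2 * ((m : ℤ) + 4) * (m + 2) ≤ objective m f := by
  rcases le_or_gt 6 m with hm | hm
  · have h1 : ((m + 5).choose l : ℤ) * max (f l) 0 ≤ objective m f :=
      Finset.single_le_sum (f := fun l => ((m + 5).choose l : ℤ) * max (f l) 0)
        (fun i _ => by positivity) (Finset.mem_range.2 (by omega))
    have h2 : ((m + 5).choose 3 : ℤ) ≤ (m + 5).choose l := by
      exact_mod_cast choose_three_le (m + 5) l h3 (by omega)
    have h4 : ((m + 5).choose l : ℤ) * 1 ≤ ((m + 5).choose l : ℤ) * max (f l) 0 :=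
      mul_le_mul_of_nonneg_left (hpos.trans (le_max_left _ _)) (by positivity)
    have h5 := six_mul_choose_three (m + 3)
    push_cast at h5
    obtain ⟨k, rfl⟩ := Nat.exists_eq_add_of_le hm
    push_cast at *
    nlinarith [sq_nonneg (k : ℤ), pow_nonneg (show (0 : ℤ) ≤ k by positivity) 3]
  · exact middle_bound_small m hm f h l h3 hl hpos

lemma lower_bound (m : ℕ) (f : ℕ → ℤ) (h : ∀ j < 5, pairing m f j = 0) (l : ℕ)
    (hl : l ≤ m + 5) (hne : f l ≠ 0) : 2 * ((m : ℤ) + 4) * (m + 2) ≤ objective m f := by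
  by_cases hmid : ∀ l, 3 ≤ l → l ≤ m + 2 → f l = 0
  · rw [objective_six m f hmid h]
    obtain ⟨g0, g1, g3, g4, g5⟩ := (constraints_iff m f hmid).1 h
    have h2 : f 2 ≠ 0 := by
      intro h2
      rw [h2, mul_zero] at g0 g1 g4 g5
      rw [h2, neg_zero] at g3
      rcases Nat.lt_or_ge l 3 with h | h
      · interval_cases l <;> contradiction
      · rcases Nat.lt_or_ge (m + 2) l with h' | h'
        · obtain rfl | rfl | rfl : l = m + 3 ∨ l = m + 4 ∨ l = m + 5 := by omega
          all_goals contradiction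
        · exact hne (hmid l h h')
    have : 1 ≤ |f 2| := Int.one_le_abs h2
    exact le_mul_of_one_le_right (by positivity) this
  · push Not at hmid
    obtain ⟨k, hk3, hk, hk0⟩ := hmid
    rcases lt_or_gt_of_ne hk0 with hneg | hpos
    · rw [← objective_neg m f h]
      exact middle_bound m (-f) (fun j hj => by rw [pairing_neg, h j hj, neg_zero]) k hk3 hk
        (by rw [Pi.neg_apply]; omega)
    · exact middle_bound m f h k hk3 hk hpos

/-- The minimizer, supported on `{0, 1, 2, n-2, n-1, n}` with `n = m + 5`. -/
def minimizer (m l : ℕ) : ℤ :=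
  if l = 0 then (m + 2).choose 2 else if l = 1 then -(m + 1) else if l = 2 then 1
  else if l = m + 3 then -1 else if l = m + 4 then m + 1
  else if l = m + 5 then -(m + 2).choose 2 else 0

theorem u1_4local_integer_optimization (n : ℕ) (hn : 5 ≤ n) :
    IsLeast
      {s : ℤ | ∃ x : Fin (n + 1) → ℤ, x ≠ 0 ∧
        (∀ j : Fin 5, ∑ l : Fin (n + 1), binomZ (n - 4) ((l : ℤ) - (j : ℤ)) * x l = 0) ∧
        s = ∑ l : Fin (n + 1), (n.choose (l : ℕ) : ℤ) * max (x l) 0}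
      (2 * ((n : ℤ) - 1) * ((n : ℤ) - 3)) := by
  obtain ⟨m, rfl⟩ := Nat.exists_eq_add_of_le' hn
  have hval : 2 * (((m + 5 : ℕ) : ℤ) - 1) * (((m + 5 : ℕ) : ℤ) - 3) =
      2 * ((m : ℤ) + 4) * (m + 2) := by push_cast; ring
  have hP : ∀ (f : ℕ → ℤ) (j : ℕ), ∑ l : Fin (m + 5 + 1),
      binomZ (m + 5 - 4) ((l : ℤ) - (j : ℤ)) * f l = pairing m f j := fun f j => by
    simp only [binomZ_sub]
    exact Fin.sum_univ_eq_sum_range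
      (fun l => (if j ≤ l then ((m + 1).choose (l - j) : ℤ) else 0) * f l) (m + 6)
  have hO : ∀ f : ℕ → ℤ, ∑ l : Fin (m + 5 + 1),
      ((m + 5).choose (l : ℕ) : ℤ) * max (f l) 0 = objective m f := fun f =>
    Fin.sum_univ_eq_sum_range (fun l => ((m + 5).choose l : ℤ) * max (f l) 0) (m + 6)
  rw [hval]
  constructor
  · have hmid : ∀ l, 3 ≤ l → l ≤ m + 2 → minimizer m l = 0 := fun l h1 h2 => by
      unfold minimizer
      repeat rw [if_neg (by omega)]
    have hc : ∀ j < 5, pairing m (minimizer m) j = 0 :=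
      (constraints_iff m _ hmid).2 (by simp [minimizer])
    refine ⟨fun l => minimizer m l, fun h0 => ?_, fun j => ?_, ?_⟩
    · have := congrFun h0 ⟨2, by omega⟩
      simp [minimizer] at this
    · rw [hP]; exact hc j j.2
    · rw [hO, objective_six m _ hmid hc]
      simp [minimizer]
  · rintro s ⟨x, hx, hc, rfl⟩
    obtain ⟨f, hf⟩ : ∃ f : ℕ → ℤ, x = fun l : Fin (m + 5 + 1) => f l :=
      ⟨fun l => if h : l < m + 5 + 1 then x ⟨l, h⟩ else 0, by ext l; simp only [l.2, dif_pos, Fin.eta]⟩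
    subst hf
    obtain ⟨l, hl⟩ := Function.ne_iff.1 hx
    rw [hO]
    exact lower_bound m f (fun j hj => by rw [← hP]; exact hc ⟨j, hj⟩) l (by omega) hl
end
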